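/- arXiv:0905.4879 — 4 statements merged into one kernel-verified Lean document; each statement's English description precedes it below -/
import Mathlib

section
/- Let G be a weighted marked graph over R and let v, w be nonadjacent, unlooped twin vertices of G with v unmarked and w marked. Let (G − w)' be the weighted marked graph obtained from G − w by changing the weights of v to α'(v) = α(v)α(w) + α(v)β(w) and β'(v) = β(v)α(w). Then [G] = [(G − w)'] + β(v)β(w)·[G − v − w]. -/
/-!
The sum over vertex subsets is split according to membership of `w`, then of `v` (`wsum_split`),
and the nullities of the resulting matrices are compared, for `S` a set of other vertices.

* `w ∉ T`: the marked unlooped vertex `w` is discarded, so `𝒜(G)_T = 𝒜(G - w)_T`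
  (`nullity_of_notMem`). These terms carry the weights `α(v)α(w)` and `β(v)α(w)`.
* `T = S ∪ {w}`: the twin rows of `v` and `w` differ by the basis vector at `w`, so `w` can be
  eliminated and the nullity is that of `𝒜(G - w)_S` (`nullity_of_mem_of_notMem`). These terms
  carry the weight `α(v)β(w)`.
* `T = S ∪ {v, w}`: the rows of `v` and `w` force equal coordinates at `v` and `w` in a kernel
  vector, so their columns cancel, and the common value is determined by the other coordinates.
  The nullity is that of `𝒜(G - v - w)_S` (`nullity_of_mem_of_mem`), with weight `β(v)β(w)`.

All nullities are computed as dimensions of the spaces `kerT` of vectors on the full vertex set,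
which makes the passage to a vertex-deleted graph a restriction map (`nullity_eq_of_induced`).
-/


/-- A weighted marked graph over `R` with vertex type `V`: a symmetric adjacency
matrix over `GF(2)` (diagonal entries record loops), a finite set of marked
vertices, weight functions `alpha` and `beta`, and a number `phi` of free loops. -/
structure WMG (R : Type*) (V : Type*) where
  adj : Matrix V V (ZMod 2)
  symm : adj.IsSymm
  marked : Finset V
  alpha : V → R
  beta : V → R
  phi : ℕ

namespace WMG

variable {R : Type*} {V : Type*}

/-- The matrix `𝒜(G)` with the diagonal entries at vertices of `T` toggled. -/
def adjT [DecidableEq V] (G : WMG R V) (T : Finset V) : Matrix V V (ZMod 2) :=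
  Matrix.of fun i j => G.adj i j + if i = j ∧ i ∈ T then 1 else 0

/-- The vertices whose rows and columns survive in `𝒜(G)_T`: all vertices except
marked ones whose toggled diagonal entry is `0`. -/
def keep [Fintype V] [DecidableEq V] (G : WMG R V) (T : Finset V) : Finset V :=
  Finset.univ.filter fun x => ¬(x ∈ G.marked ∧ G.adjT T x x = 0)

/-- The `GF(2)`-nullity of `𝒜(G)_T` (number of columns minus rank). -/
noncomputable def nullity [Fintype V] [DecidableEq V] (G : WMG R V) (T : Finset V) : ℕ :=
  Fintype.card {x // x ∈ G.keep T} -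
    ((G.adjT T).submatrix (fun i : {x // x ∈ G.keep T} => i.1)
      (fun j : {x // x ∈ G.keep T} => j.1)).rank

/-- The weighted marked-graph bracket polynomial
`[G] = d^φ · Σ_T (∏_{v ∉ T} α v) (∏_{t ∈ T} β t) d^{ν(𝒜(G)_T)}`. -/
noncomputable def bracket [CommRing R] [Fintype V] [DecidableEq V]
    (G : WMG R V) (d : Rˣ) : R :=
  (d : R) ^ G.phi *
    ∑ T : Finset V,
      (∏ x ∈ Tᶜ, G.alpha x) * (∏ t ∈ T, G.beta t) * (d : R) ^ G.nullity T

/-- Deletion of a set `S` of vertices (with all incident edges); all other data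
unchanged. -/
def delete [DecidableEq V] (G : WMG R V) (S : Finset V) : WMG R {x : V // x ∉ S} where
  adj := G.adj.submatrix Subtype.val Subtype.val
  symm := G.symm.submatrix Subtype.val
  marked := G.marked.subtype fun x => x ∉ S
  alpha := fun x => G.alpha x.1
  beta := fun x => G.beta x.1
  phi := G.phi

/-- Change the weights of the vertex `a` to `x` and `y`. -/
def reweight [DecidableEq V] (G : WMG R V) (a : V) (x y : R) : WMG R V :=
  { G with alpha := Function.update G.alpha a x, beta := Function.update G.beta a y }

/-- Mark the vertex `a` and change its weights to `x` and `y`. -/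
def markReweight [DecidableEq V] (G : WMG R V) (a : V) (x y : R) : WMG R V :=
  { G with marked := insert a G.marked,
           alpha := Function.update G.alpha a x,
           beta := Function.update G.beta a y }

/-- The composition `F ∗ H` of two weighted marked graphs along the vertices
`aF` and `aH` (thought of as a single shared vertex `a`): the vertex set is the
disjoint union of `V(F) \ {a}` and `V(H) \ {a}`; loops, marks and weights are
inherited; two vertices are adjacent iff they are adjacent in `F`, or in `H`,
or one is a neighbor of `a` in `F` and the other is a neighbor of `a` in `H`;
free loops add. -/
def comp {VF VH : Type*} [DecidableEq VF] [DecidableEq VH]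
    (F : WMG R VF) (H : WMG R VH) (aF : VF) (aH : VH) :
    WMG R ({x : VF // x ≠ aF} ⊕ {y : VH // y ≠ aH}) where
  adj := Matrix.of fun p q =>
    match p, q with
    | Sum.inl x, Sum.inl x' => F.adj x.1 x'.1
    | Sum.inl x, Sum.inr y => F.adj x.1 aF * H.adj aH y.1
    | Sum.inr y, Sum.inl x => F.adj x.1 aF * H.adj aH y.1
    | Sum.inr y, Sum.inr y' => H.adj y.1 y'.1
  symm := by
    refine Matrix.ext fun p q => ?_
    rcases p with x | y <;> rcases q with x' | y'
    · exact F.symm.apply x.1 x'.1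
    · rfl
    · rfl
    · exact H.symm.apply y.1 y'.1
  marked := (F.marked.subtype fun x => x ≠ aF).disjSum (H.marked.subtype fun y => y ≠ aH)
  alpha := Sum.elim (fun x => F.alpha x.1) (fun y => H.alpha y.1)
  beta := Sum.elim (fun x => F.beta x.1) (fun y => H.beta y.1)
  phi := F.phi + H.phi

/-- The universal property of Theorem `pjoin` for `F` and `a`, with candidate
weights `A = α'(a)`, `B = β'(a)`, `Am = α'(a_m)`: for every weighted marked
graph `H` sharing exactly the unlooped unmarked vertex `a` with `F`, in which
no neighbor of `a` is marked, `[F ∗ H] = [H'] + [H'_m]`. -/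
def UnivProp {R : Type*} [CommRing R] {VF : Type u_v} [Fintype VF] [DecidableEq VF]
    (d : Rˣ) (F : WMG R VF) (a : VF) (A B Am : R) : Prop :=
  ∀ (VH : Type u_v) [Fintype VH] [DecidableEq VH] (H : WMG R VH) (aH : VH),
    H.adj aH aH = 0 → aH ∉ H.marked →
    (∀ y : VH, H.adj aH y = 1 → y ∉ H.marked) →
    (F.comp H a aH).bracket d =
      (H.reweight aH A B).bracket d + (H.markReweight aH Am 0).bracket d

/-- The local complement `G^v`: toggle all entries of the adjacency matrix
(including diagonal ones) between members of the open neighborhood of `v`. -/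
def localComp [DecidableEq V] (G : WMG R V) (v : V) : WMG R V where
  adj := Matrix.of fun a b =>
    G.adj a b + if (a ≠ v ∧ G.adj v a = 1) ∧ (b ≠ v ∧ G.adj v b = 1) then 1 else 0
  symm := by
    refine Matrix.ext fun a b => ?_
    have h : ((b ≠ v ∧ G.adj v b = 1) ∧ (a ≠ v ∧ G.adj v a = 1)) ↔
        ((a ≠ v ∧ G.adj v a = 1) ∧ (b ≠ v ∧ G.adj v b = 1)) := and_comm
    simp only [Matrix.transpose_apply, Matrix.of_apply]
    rw [G.symm.apply a b, if_congr h rfl rfl]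
  marked := G.marked
  alpha := G.alpha
  beta := G.beta
  phi := G.phi

/-- The condition for the pivot `G^{vw}` to toggle the adjacency between `a`
and `b`: `a` and `b` are distinct and (in one order or the other) `a ∈ N(v)`,
`b ∈ N(w)`, and `a ∉ N(w)` or `b ∉ N(v)`. -/
def pivCond [DecidableEq V] (G : WMG R V) (v w a b : V) : Prop :=
  a ≠ b ∧
    (((a ≠ v ∧ G.adj v a = 1) ∧ (b ≠ w ∧ G.adj w b = 1) ∧
        (¬(a ≠ w ∧ G.adj w a = 1) ∨ ¬(b ≠ v ∧ G.adj v b = 1))) ∨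
     ((b ≠ v ∧ G.adj v b = 1) ∧ (a ≠ w ∧ G.adj w a = 1) ∧
        (¬(b ≠ w ∧ G.adj w b = 1) ∨ ¬(a ≠ v ∧ G.adj v a = 1))))

instance pivCond_decidable [DecidableEq V] (G : WMG R V) (v w a b : V) :
    Decidable (pivCond G v w a b) := by
  unfold pivCond; infer_instance

lemma pivCond_comm [DecidableEq V] (G : WMG R V) (v w a b : V) :
    pivCond G v w a b ↔ pivCond G v w b a := by
  unfold pivCond
  constructor <;> rintro ⟨h1, h2⟩ <;> exact ⟨Ne.symm h1, h2.symm⟩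

/-- The pivot `G^{vw}`. -/
def pivot [DecidableEq V] (G : WMG R V) (v w : V) : WMG R V where
  adj := Matrix.of fun a b => G.adj a b + if pivCond G v w a b then 1 else 0
  symm := by
    refine Matrix.ext fun a b => ?_
    simp only [Matrix.transpose_apply, Matrix.of_apply]
    rw [G.symm.apply a b, if_congr (pivCond_comm G v w b a) rfl rfl]
  marked := G.marked
  alpha := G.alpha
  beta := G.beta
  phi := G.phi

/-- The marked pivot `G_c^{vw}`: perform the pivot `G^{vw}`, then interchange
the neighborhoods of `v` and `w` (leaving loops unchanged) and toggle the
marks on `v` and `w`. -/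
def markedPivot [DecidableEq V] (G : WMG R V) (v w : V) : WMG R V where
  adj := Matrix.of fun a b =>
    if a = b then (G.pivot v w).adj a b
    else (G.pivot v w).adj (Equiv.swap v w a) (Equiv.swap v w b)
  symm := by
    refine Matrix.ext fun a b => ?_
    simp only [Matrix.transpose_apply, Matrix.of_apply]
    by_cases h : a = b
    · subst h; simp
    · rw [if_neg fun hh => h hh.symm, if_neg h]
      exact (G.pivot v w).symm.apply _ _
  marked := (G.marked \ {v, w}) ∪ (({v, w} : Finset V) \ G.marked)
  alpha := G.alpha
  beta := G.beta
  phi := G.phi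

/-- The bordered version of `𝒜(F − a)_T`: adjoin the row and column recording
adjacency to `a` in `F`, with corner entry `c`; `borderedNullity` is its
`GF(2)`-nullity. -/
noncomputable def borderedNullity {VF : Type*} [Fintype VF] [DecidableEq VF]
    (F : WMG R VF) (a : VF) (T : Finset {x : VF // x ∉ ({a} : Finset VF)})
    (c : ZMod 2) : ℕ :=
  Fintype.card (Option {x // x ∈ (F.delete {a}).keep T}) -
    (Matrix.of (fun p q =>
      match p, q with
      | some i, some j => (F.delete {a}).adjT T i.1 j.1
      | some i, none => F.adj i.1.1 a
      | none, some j => F.adj j.1.1 a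
      | none, none => c) :
      Matrix (Option {x // x ∈ (F.delete {a}).keep T})
        (Option {x // x ∈ (F.delete {a}).keep T}) (ZMod 2)).rank

end WMG

namespace WMG

/-! ### Nullity as the dimension of a space of vectors on all vertices -/

/-- The space of vectors indexed by all of `V` that vanish off `G.keep T` and are annihilated by
the rows of `𝒜(G) + diag(T)` at `G.keep T`; extension by zero identifies it with the kernel
of `𝒜(G)_T`. -/
def kerT {R V : Type*} [Fintype V] [DecidableEq V] (G : WMG R V) (T : Finset V) :
    Submodule (ZMod 2) (V → ZMod 2) where
  carrier := {f | (∀ i ∉ G.keep T, f i = 0) ∧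
    ∀ i ∈ G.keep T, ∑ j, G.adj i j * f j + (if i ∈ T then f i else 0) = 0}
  zero_mem' := by simp
  add_mem' := by
    rintro f g ⟨hf, hf'⟩ ⟨hg, hg'⟩
    refine ⟨fun i hi => by simp [hf i hi, hg i hi], fun i hi => ?_⟩
    have h1 := hf' i hi
    have h2 := hg' i hi
    simp only [Pi.add_apply, mul_add, Finset.sum_add_distrib]
    split_ifs at h1 h2 ⊢ <;> linear_combination h1 + h2
  smul_mem' := by
    rintro c f ⟨hf, hf'⟩
    refine ⟨fun i hi => by simp [hf i hi], fun i hi => ?_⟩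
    have h1 := hf' i hi
    simp only [Pi.smul_apply, smul_eq_mul, mul_left_comm _ c, ← Finset.mul_sum]
    split_ifs at h1 ⊢ <;> linear_combination c * h1

lemma mem_kerT {R V : Type*} [Fintype V] [DecidableEq V] {G : WMG R V} {T : Finset V}
    {f : V → ZMod 2} : f ∈ G.kerT T ↔ (∀ i ∉ G.keep T, f i = 0) ∧
    ∀ i ∈ G.keep T, ∑ j, G.adj i j * f j + (if i ∈ T then f i else 0) = 0 := Iff.rfl

lemma mem_keep {R V : Type*} [Fintype V] [DecidableEq V] {G : WMG R V} {T : Finset V} {x : V} :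
    x ∈ G.keep T ↔ ¬ (x ∈ G.marked ∧ G.adj x x + (if x ∈ T then 1 else 0) = 0) := by
  simp [keep, adjT]

lemma finrank_eq_of_bijOn {V V' : Type*} [Fintype V] [Fintype V']
    {K : Submodule (ZMod 2) (V → ZMod 2)} {K' : Submodule (ZMod 2) (V' → ZMod 2)}
    (ρ : (V → ZMod 2) →ₗ[ZMod 2] (V' → ZMod 2)) (h : Set.BijOn ρ K K') :
    Module.finrank (ZMod 2) K = Module.finrank (ZMod 2) K' :=
  (LinearEquiv.ofBijective (ρ.restrict h.mapsTo) h.bijective).finrank_eq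

lemma sum_subtype_add_sum {V M : Type*} [Fintype V] [DecidableEq V] [AddCommMonoid M]
    (S : Finset V) (g : V → M) :
    ∑ j, g j = ∑ j : {x // x ∉ S}, g j + ∑ j ∈ S, g j := by
  rw [← Finset.sum_compl_add_sum S g, Finset.sum_subtype Sᶜ (p := fun x => x ∉ S) (by simp)]

lemma nullity_eq_finrank_kerT {R V : Type*} [Fintype V] [DecidableEq V] (G : WMG R V)
    (T : Finset V) : G.nullity T = Module.finrank (ZMod 2) (G.kerT T) := by
  set M : Matrix {x // x ∈ G.keep T} {x // x ∈ G.keep T} (ZMod 2) :=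
    (G.adjT T).submatrix (fun i => i.1) (fun j => j.1) with hM
  have hrank : G.nullity T = Module.finrank (ZMod 2) (LinearMap.ker M.mulVecLin) := by
    have h := M.mulVecLin.finrank_range_add_finrank_ker
    rw [Module.finrank_fintype_fun_eq_card] at h
    unfold nullity
    rw [← hM, Matrix.rank]
    omega
  rw [hrank]
  symm
  refine finrank_eq_of_bijOn
    (LinearMap.funLeft (ZMod 2) (ZMod 2) (Subtype.val : {x // x ∈ G.keep T} → V)) ?_
  have key : ∀ f : V → ZMod 2, (∀ i ∉ G.keep T, f i = 0) → ∀ i : {x // x ∈ G.keep T},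
      M.mulVec (fun j => f j) i = ∑ j, G.adj i j * f j + (if i.1 ∈ T then f i else 0) := by
    intro f hf i
    have h1 : ∑ j, G.adjT T i j * f j
        = ∑ j, G.adj i j * f j + (if i.1 ∈ T then f i else 0) := by
      simp [adjT, add_mul, Finset.sum_add_distrib, ite_and]
    rw [← h1, Matrix.mulVec, dotProduct]
    rw [← Finset.sum_subset (Finset.subset_univ (G.keep T))
      (fun j _ hj => by rw [hf j hj, mul_zero]),
      Finset.sum_subtype (G.keep T) (p := fun x => x ∈ G.keep T) (by simp)]
    rfl
  refine ⟨fun f hf => ?_, fun f hf g hg hfg => ?_, fun g hg => ?_⟩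
  · ext i
    exact (key f hf.1 i).trans (hf.2 i i.2)
  · ext i
    by_cases hi : i ∈ G.keep T
    · exact congrFun hfg ⟨i, hi⟩
    · rw [hf.1 i hi, hg.1 i hi]
  · let f : V → ZMod 2 := fun i => if h : i ∈ G.keep T then g ⟨i, h⟩ else 0
    have hfg : (fun j : {x // x ∈ G.keep T} => f j) = g := by
      ext j
      simp [f]
    have hf0 : ∀ i ∉ G.keep T, f i = 0 := fun i hi => by simp [f, hi]
    refine ⟨f, ⟨hf0, fun i hi => ?_⟩, hfg⟩
    rw [← key f hf0 ⟨i, hi⟩, hfg]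
    exact congrFun (LinearMap.mem_ker.1 hg) ⟨i, hi⟩

/-! ### Nullity under vertex deletion -/

section Subgraph

variable {R V : Type*} [Fintype V] [DecidableEq V] {G : WMG R V} {S : Finset V}
  {H : WMG R {x : V // x ∉ S}}

/-- If the toggled sets agree off `S`, then a vertex outside `S` survives in both
graphs or in neither. -/
lemma mem_keep_iff_of_induced (hadj : H.adj = (G.delete S).adj)
    (hmarked : ∀ x : {x : V // x ∉ S}, x ∈ H.marked ↔ (x : V) ∈ G.marked)
    {T : Finset V} {T' : Finset {x : V // x ∉ S}} (hT : ∀ x, x ∈ T' ↔ x.1 ∈ T)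
    (x : {x : V // x ∉ S}) : x ∈ H.keep T' ↔ x.1 ∈ G.keep T := by
  simp only [mem_keep, hadj, hmarked, hT, delete, Matrix.submatrix_apply]

/-- The nullity is unchanged by deleting `S` if restriction to the complement of `S` is a
bijection between the two kernels. It lands in the kernel of `H` when the columns of `S`
contribute nothing to the equations off `S` (`hzero`); it is injective by `hinj` and
surjective by `hext`, where only the equations at `S` and the vanishing of the contribution
of `S` to the other equations need to be checked for the extension. -/
lemma nullity_eq_of_induced (hadj : H.adj = (G.delete S).adj)
    (hmarked : ∀ x : {x : V // x ∉ S}, x ∈ H.marked ↔ (x : V) ∈ G.marked)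
    {T : Finset V} {T' : Finset {x : V // x ∉ S}} (hT : ∀ x, x ∈ T' ↔ x.1 ∈ T)
    (hzero : ∀ f ∈ G.kerT T, ∀ i ∉ S, ∑ j ∈ S, G.adj i j * f j = 0)
    (hinj : ∀ f ∈ G.kerT T, (∀ i ∉ S, f i = 0) → ∀ i ∈ S, f i = 0)
    (hext : ∀ g ∈ H.kerT T', ∃ f : V → ZMod 2, (∀ i : {x : V // x ∉ S}, f i = g i) ∧
      (∀ i ∈ S, i ∉ G.keep T → f i = 0) ∧
      (∀ i ∈ S, i ∈ G.keep T → ∑ j, G.adj i j * f j + (if i ∈ T then f i else 0) = 0) ∧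
      (∀ i ∉ S, ∑ j ∈ S, G.adj i j * f j = 0)) :
    G.nullity T = H.nullity T' := by
  have hkeep := mem_keep_iff_of_induced hadj hmarked hT
  have hadj' : ∀ i j, H.adj i j = G.adj i j := fun i j => by rw [hadj]; rfl
  rw [nullity_eq_finrank_kerT, nullity_eq_finrank_kerT]
  refine finrank_eq_of_bijOn
    (LinearMap.funLeft (ZMod 2) (ZMod 2) (Subtype.val : {x // x ∉ S} → V)) ⟨?_, ?_, ?_⟩
  · intro f hf
    refine ⟨fun i hi => hf.1 i (by rwa [← hkeep]), fun i hi => ?_⟩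
    have h := hf.2 i ((hkeep i).1 hi)
    rw [sum_subtype_add_sum S, hzero f hf i i.2, add_zero] at h
    simpa only [hadj', hT, LinearMap.funLeft_apply] using h
  · intro f hf g hg hfg
    have hsub := (G.kerT T).sub_mem hf hg
    have h0 : ∀ i ∉ S, (f - g) i = 0 := fun i hi => sub_eq_zero.2 (congrFun hfg ⟨i, hi⟩)
    ext i
    by_cases hi : i ∈ S
    · exact sub_eq_zero.1 (hinj _ hsub h0 i hi)
    · exact sub_eq_zero.1 (h0 i hi)
  · intro g hg
    obtain ⟨f, hfg, h1, h2, h3⟩ := hext g hg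
    refine ⟨f, ⟨fun i hi => ?_, fun i hi => ?_⟩, funext hfg⟩
    · by_cases hiS : i ∈ S
      · exact h1 i hiS hi
      · exact (hfg ⟨i, hiS⟩).trans (hg.1 ⟨i, hiS⟩ (by rwa [hkeep]))
    · by_cases hiS : i ∈ S
      · exact h2 i hiS hi
      · have h := hg.2 ⟨i, hiS⟩ ((hkeep ⟨i, hiS⟩).2 hi)
        rw [sum_subtype_add_sum S, h3 i hiS, add_zero]
        simpa only [hadj', hT, ← hfg] using h

end Subgraph

/-! ### The three nullity comparisons for twins -/

section Twins

variable {R V : Type*} [Fintype V] [DecidableEq V] {G : WMG R V} {v w : V}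

/-- An untoggled unlooped marked vertex does not contribute a row or column. -/
lemma nullity_of_notMem (hloopw : G.adj w w = 0) (hmw : w ∈ G.marked)
    {H : WMG R {x : V // x ∉ ({w} : Finset V)}} (hadj : H.adj = (G.delete {w}).adj)
    (hmarked : ∀ x : {x : V // x ∉ ({w} : Finset V)}, x ∈ H.marked ↔ (x : V) ∈ G.marked)
    {T : Finset V} {T' : Finset {x : V // x ∉ ({w} : Finset V)}}
    (hT : ∀ x, x ∈ T' ↔ x.1 ∈ T) (hw : w ∉ T) :
    G.nullity T = H.nullity T' := by
  have hk : w ∉ G.keep T := by simp [mem_keep, hmw, hloopw, hw]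
  refine nullity_eq_of_induced hadj hmarked hT ?_ ?_ ?_
  · intro f hf i _
    simp [hf.1 w hk]
  · intro f hf _ i hi
    rw [Finset.mem_singleton.1 hi]
    exact hf.1 w hk
  · intro g _
    refine ⟨fun i => if h : i ∉ ({w} : Finset V) then g ⟨i, h⟩ else 0, ?_, ?_, ?_, ?_⟩
    · intro i
      simp [i.2]
    · simp
    · simp [hk]
    · simp

/-- If `w` is toggled but its twin `v` is not, then the difference of the rows of `w` and `v` is
the standard basis vector at `w`, so `w` may be eliminated. -/
lemma nullity_of_mem_of_notMem (hvw : v ≠ w) (hloopv : G.adj v v = 0) (hloopw : G.adj w w = 0)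
    (htwin : ∀ x : V, x ≠ v → x ≠ w → G.adj v x = G.adj w x)
    (hmv : v ∉ G.marked) (hadjvw : G.adj v w = 0)
    {H : WMG R {x : V // x ∉ ({w} : Finset V)}} (hadj : H.adj = (G.delete {w}).adj)
    (hmarked : ∀ x : {x : V // x ∉ ({w} : Finset V)}, x ∈ H.marked ↔ (x : V) ∈ G.marked)
    {T : Finset V} {T' : Finset {x : V // x ∉ ({w} : Finset V)}}
    (hT : ∀ x, x ∈ T' ↔ x.1 ∈ T) (hw : w ∈ T) (hv : v ∉ T) :
    G.nullity T = H.nullity T' := by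
  have hkw : w ∈ G.keep T := by simp [mem_keep, hloopw, hw]
  have hkv : v ∈ G.keep T := by simp [mem_keep, hmv]
  have hrow : ∀ x, G.adj w x = G.adj v x := by
    intro x
    by_cases hxv : x = v
    · rw [hxv, G.symm.apply v w, hadjvw, hloopv]
    · by_cases hxw : x = w
      · rw [hxw, hloopw, hadjvw]
      · exact (htwin x hxv hxw).symm
  have hf0 : ∀ f ∈ G.kerT T, f w = 0 := by
    intro f hf
    have h1 := hf.2 w hkw
    have h2 := hf.2 v hkv
    simp only [hw, hv, if_true, if_false, hrow] at h1 h2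
    linear_combination h1 - h2
  refine nullity_eq_of_induced hadj hmarked hT ?_ ?_ ?_
  · intro f hf i _
    simp [hf0 f hf]
  · intro f hf _ i hi
    rw [Finset.mem_singleton.1 hi]
    exact hf0 f hf
  · intro g hg
    refine ⟨fun i => if h : i ∉ ({w} : Finset V) then g ⟨i, h⟩ else 0, ?_, ?_, ?_, ?_⟩
    · intro i
      simp [i.2]
    · simp
    · intro i hi _
      have hvS : v ∉ ({w} : Finset V) := by simpa using hvw
      have h := hg.2 ⟨v, hvS⟩ ((mem_keep_iff_of_induced hadj hmarked hT _).2 hkv)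
      rw [Finset.mem_singleton.1 hi, sum_subtype_add_sum {w}]
      simp only [hT, hv, if_false, hadj, delete, Matrix.submatrix_apply, add_zero] at h
      simp only [hrow]
      have hne : ∀ j : {x : V // x ∉ ({w} : Finset V)}, j.1 ≠ w := fun j => by simpa using j.2
      simpa [hne] using h
    · simp

/-- If both twins `v` and `w` are toggled, then a kernel vector `f` has
`f v = f w`, so the columns of `v` and `w` cancel; the common value is determined by the rest of
`f`. -/
lemma nullity_of_mem_of_mem (hvw : v ≠ w) (hloopv : G.adj v v = 0) (hloopw : G.adj w w = 0)
    (htwin : ∀ x : V, x ≠ v → x ≠ w → G.adj v x = G.adj w x)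
    (hmv : v ∉ G.marked) (hadjvw : G.adj v w = 0)
    {T : Finset V} {T' : Finset {x : V // x ∉ ({v, w} : Finset V)}}
    (hT : ∀ x, x ∈ T' ↔ x.1 ∈ T) (hw : w ∈ T) (hv : v ∈ T) :
    G.nullity T = (G.delete {v, w}).nullity T' := by
  have hkw : w ∈ G.keep T := by simp [mem_keep, hloopw, hw]
  have hkv : v ∈ G.keep T := by simp [mem_keep, hmv]
  have hrow : ∀ x, G.adj w x = G.adj v x := by
    intro x
    by_cases hxv : x = v
    · rw [hxv, G.symm.apply v w, hadjvw, hloopv]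
    · by_cases hxw : x = w
      · rw [hxw, hloopw, hadjvw]
      · exact (htwin x hxv hxw).symm
  have hcancel : ∀ f : V → ZMod 2, f v = f w → ∀ i,
      ∑ j ∈ ({v, w} : Finset V), G.adj i j * f j = 0 := by
    intro f hf i
    rw [Finset.sum_pair hvw, hf, G.symm.apply i v |>.symm, G.symm.apply i w |>.symm, hrow]
    exact CharTwo.add_self_eq_zero _
  have heq : ∀ f ∈ G.kerT T, f v = f w := by
    intro f hf
    have h1 := hf.2 w hkw
    have h2 := hf.2 v hkv
    simp only [hw, hv, if_true, hrow] at h1 h2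
    linear_combination h2 - h1
  refine nullity_eq_of_induced rfl (fun x => by simp [delete]) hT ?_ ?_ ?_
  · intro f hf i _
    exact hcancel f (heq f hf) i
  · intro f hf h0 i hi
    have h2 := hf.2 v hkv
    rw [sum_subtype_add_sum {v, w}, hcancel f (heq f hf),
      Finset.sum_eq_zero (fun j _ => by rw [h0 j j.2, mul_zero])] at h2
    simp only [hv, if_true, zero_add] at h2
    rcases (by simpa using hi : i = v ∨ i = w) with rfl | rfl
    · exact h2
    · rw [← heq f hf, h2]
  · intro g _
    -- The equations at `v` and `w` force this common value (up to sign, irrelevant mod 2).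
    let c : ZMod 2 := ∑ j : {x : V // x ∉ ({v, w} : Finset V)}, G.adj v j * g j
    let f : V → ZMod 2 := fun i => if h : i ∉ ({v, w} : Finset V) then g ⟨i, h⟩ else c
    have hfg : ∀ i : {x : V // x ∉ ({v, w} : Finset V)}, f i = g i := fun i => dif_pos i.2
    have hfS : ∀ i ∈ ({v, w} : Finset V), f i = c := fun i hi => dif_neg (not_not.2 hi)
    have hfv : f v = f w := by rw [hfS v (by simp), hfS w (by simp)]
    have hS : ∀ i ∈ ({v, w} : Finset V), i ∈ T ∧ i ∈ G.keep T ∧ ∀ x, G.adj i x = G.adj v x := by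
      intro i hi
      rcases (by simpa using hi : i = v ∨ i = w) with rfl | rfl
      · exact ⟨hv, hkv, fun _ => rfl⟩
      · exact ⟨hw, hkw, hrow⟩
    refine ⟨f, hfg, fun i hi hk => absurd (hS i hi).2.1 hk, fun i hi _ => ?_,
      fun i _ => hcancel f hfv i⟩
    rw [if_pos (hS i hi).1, hfS i hi, sum_subtype_add_sum {v, w}, hcancel f hfv, add_zero]
    simp only [(hS i hi).2.2, hfg]
    exact CharTwo.add_self_eq_zero c

end Twins

/-! ### Splitting the sum over vertex subsets -/

/-- The sum over vertex subsets underlying the bracket polynomial, with an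
arbitrary function `c` in place of `T ↦ d ^ ν(𝒜(G)_T)`. -/
def wsum {R V : Type*} [CommRing R] [Fintype V] [DecidableEq V] (α β : V → R)
    (c : Finset V → R) : R :=
  ∑ T : Finset V, (∏ x ∈ Tᶜ, α x) * (∏ t ∈ T, β t) * c T

/-- Splitting the subsets `T` according to whether they contain the vertex `a`, where `e`
identifies `U` with the remaining vertices. -/
lemma wsum_split {R V U : Type*} [CommRing R] [Fintype V] [DecidableEq V] [Fintype U]
    [DecidableEq U] (e : U ↪ V) (a : V) (he : ∀ x, (∃ u, e u = x) ↔ x ≠ a)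
    (α β : V → R) (c : Finset V → R) :
    wsum α β c = α a * wsum (α ∘ e) (β ∘ e) (fun T => c (T.map e)) +
      β a * wsum (α ∘ e) (β ∘ e) (fun T => c (insert a (T.map e))) := by
  have hu : ∀ u, e u ≠ a := fun u => (he _).1 ⟨u, rfl⟩
  have hna : ∀ T : Finset U, a ∉ T.map e := fun T h => by
    obtain ⟨u, _, h⟩ := Finset.mem_map.1 h
    exact hu u h
  have huniv : (Finset.univ : Finset V) = insert a (Finset.univ.map e) := by
    ext x
    have := he x
    simp only [Finset.mem_univ, Finset.mem_insert, Finset.mem_map, true_and, this]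
    tauto
  have hpow : ∀ F : Finset V → R,
      ∑ T ∈ (Finset.univ.map e).powerset, F T = ∑ T : Finset U, F (T.map e) := by
    intro F
    symm
    refine Finset.sum_bij (fun T _ => T.map e) ?_ ?_ ?_ ?_
    · intro T _
      exact Finset.mem_powerset.2 (Finset.map_subset_map.2 (Finset.subset_univ T))
    · intro T _ T' _ h
      exact Finset.map_injective e h
    · intro T hT
      obtain ⟨T', _, h⟩ := Finset.subset_map_iff.1 (Finset.mem_powerset.1 hT)
      exact ⟨T', Finset.mem_univ _, h.symm⟩
    · intro T _
      rfl
  have hc1 : ∀ T : Finset U, (insert a (T.map e))ᶜ = Tᶜ.map e := by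
    intro T
    ext x
    have hx := he x
    by_cases hxa : x = a
    · subst hxa
      simpa using fun u _ => hu u
    · obtain ⟨u, rfl⟩ := hx.2 hxa
      simp [hu u]
  have hc2 : ∀ T : Finset U, (T.map e)ᶜ = insert a (Tᶜ.map e) := by
    intro T
    rw [← hc1, Finset.compl_insert, Finset.insert_erase (by simpa using hna T)]
  unfold wsum
  rw [← Finset.powerset_univ, huniv, Finset.sum_powerset_insert (hna _), hpow, hpow]
  simp only [hc1, hc2, Finset.prod_insert (hna _), Finset.prod_map, Finset.mul_sum,
    Function.comp_apply]
  congr 1 <;> refine Finset.sum_congr rfl fun T _ => ?_ <;> ring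

lemma bracket_eq_wsum {R V : Type*} [CommRing R] [Fintype V] [DecidableEq V]
    (G : WMG R V) (d : Rˣ) :
    G.bracket d = (d : R) ^ G.phi * wsum G.alpha G.beta (fun T => (d : R) ^ G.nullity T) := rfl

end WMG

open WMG in
theorem mixed_nonadjacent_twins {R : Type*} [CommRing R] (d : Rˣ) {V : Type*} [Fintype V] [DecidableEq V]
    (G : WMG R V) (v w : V) (hvw : v ≠ w)
    (hloopv : G.adj v v = 0) (hloopw : G.adj w w = 0)
    (htwin : ∀ x : V, x ≠ v → x ≠ w → G.adj v x = G.adj w x)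
    (hmv : v ∉ G.marked) (hmw : w ∈ G.marked) (hadj : G.adj v w = 0)
    (G' : WMG R {x : V // x ∉ ({w} : Finset V)})
    (hadj' : G'.adj = (G.delete {w}).adj)
    (hphi' : G'.phi = G.phi)
    (hmarked' : ∀ x : {x : V // x ∉ ({w} : Finset V)}, x ∈ G'.marked ↔ (x : V) ∈ G.marked)
    (halpha' : ∀ x : {x : V // x ∉ ({w} : Finset V)}, G'.alpha x =
        if (x : V) = v then G.alpha v * G.alpha w + G.alpha v * G.beta w else G.alpha x)
    (hbeta' : ∀ x : {x : V // x ∉ ({w} : Finset V)}, G'.beta x =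
        if (x : V) = v then G.beta v * G.alpha w else G.beta x) :
    G.bracket d = G'.bracket d + G.beta v * G.beta w * (G.delete {v, w}).bracket d := by
  let e : {x : V // x ∉ ({w} : Finset V)} ↪ V := Function.Embedding.subtype _
  let v' : {x : V // x ∉ ({w} : Finset V)} := ⟨v, by simpa using hvw⟩
  let e' : {x : V // x ∉ ({v, w} : Finset V)} ↪ {x : V // x ∉ ({w} : Finset V)} :=
    ⟨fun x => ⟨x.1, fun h => x.2 (Finset.mem_insert_of_mem h)⟩,
      fun x y h => Subtype.ext (congrArg (fun z => z.1) h)⟩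
  have he : ∀ x, (∃ u, e u = x) ↔ x ≠ w := by
    intro x
    simp [e]
  have he' : ∀ x, (∃ u, e' u = x) ↔ x ≠ v' := by
    intro x
    have := x.2
    rw [Finset.mem_singleton] at this
    constructor
    · rintro ⟨u, rfl⟩ h
      exact u.2 (by simp [show u.1 = v from congrArg Subtype.val h])
    · intro h
      refine ⟨⟨x.1, ?_⟩, rfl⟩
      have hx : x.1 ≠ v := fun h' => h (Subtype.ext h')
      simp [hx, this]
  have hwT : ∀ T : Finset {x : V // x ∉ ({w} : Finset V)}, w ∉ T.map e := by
    intro T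
    simp [e]
  have hvT : ∀ T : Finset {x : V // x ∉ ({v, w} : Finset V)}, v' ∉ T.map e' := by
    intro T h
    obtain ⟨u, _, h⟩ := Finset.mem_map.1 h
    exact (he' _).1 ⟨u, rfl⟩ h
  have hmem : ∀ T : Finset {x : V // x ∉ ({w} : Finset V)}, ∀ x, x ∈ T ↔ x.1 ∈ T.map e :=
    fun T x => (Finset.mem_map' e).symm
  have hmemi : ∀ T : Finset {x : V // x ∉ ({w} : Finset V)}, ∀ x,
      x ∈ T ↔ x.1 ∈ insert w (T.map e) := by
    intro T x
    have := x.2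
    rw [Finset.mem_singleton] at this
    rw [Finset.mem_insert, or_iff_right this, hmem]
  have hA : ∀ T : Finset {x : V // x ∉ ({w} : Finset V)}, G.nullity (T.map e) = G'.nullity T := fun T =>
    nullity_of_notMem hloopw hmw hadj' hmarked' (hmem T) (hwT T)
  have hB : ∀ T : Finset {x : V // x ∉ ({v, w} : Finset V)},
      G.nullity (insert w ((T.map e').map e)) = G'.nullity (T.map e') := fun T =>
    nullity_of_mem_of_notMem hvw hloopv hloopw htwin hmv hadj hadj' hmarked' (hmemi _)
      (Finset.mem_insert_self _ _) (fun h => hvT T ((hmemi _ v').2 h))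
  have hC : ∀ T : Finset {x : V // x ∉ ({v, w} : Finset V)},
      G.nullity (insert w ((insert v' (T.map e')).map e))
      = (G.delete {v, w}).nullity T := by
    intro T
    refine nullity_of_mem_of_mem hvw hloopv hloopw htwin hmv hadj (fun x => ?_)
      (Finset.mem_insert_self _ _) ((hmemi _ v').1 (Finset.mem_insert_self _ _))
    have h1 := hmemi (insert v' (T.map e')) (e' x)
    rw [Finset.mem_insert, or_iff_right ((he' _).1 ⟨x, rfl⟩), Finset.mem_map'] at h1
    exact h1
  have hne : ∀ x : {x : V // x ∉ ({v, w} : Finset V)}, x.1 ≠ v := fun x h => x.2 (by simp [h])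
  have hα : G'.alpha ∘ e' = (G.alpha ∘ e) ∘ e' := by
    ext x
    exact (halpha' (e' x)).trans (if_neg (hne x))
  have hβ : G'.beta ∘ e' = (G.beta ∘ e) ∘ e' := by
    ext x
    exact (hbeta' (e' x)).trans (if_neg (hne x))
  have hdα : (G.delete {v, w}).alpha = (G.alpha ∘ e) ∘ e' := rfl
  have hdβ : (G.delete {v, w}).beta = (G.beta ∘ e) ∘ e' := rfl
  have hdφ : (G.delete {v, w}).phi = G.phi := rfl
  have hαv : G'.alpha v' = G.alpha v * G.alpha w + G.alpha v * G.beta w :=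
    (halpha' v').trans (if_pos rfl)
  have hβv : G'.beta v' = G.beta v * G.alpha w := (hbeta' v').trans (if_pos rfl)
  have hev : e v' = v := rfl
  rw [bracket_eq_wsum, bracket_eq_wsum, bracket_eq_wsum, hphi', hdφ, hdα, hdβ,
    wsum_split e w he, wsum_split e' v' he' (G.alpha ∘ e), wsum_split e' v' he' (G.alpha ∘ e),
    wsum_split e' v' he' G'.alpha, hα, hβ, hαv, hβv]
  simp only [hA, hB, hC, Function.comp_apply, hev]
  ring
end

section
/- Let G be a weighted marked graph over R and let v₁, ..., v_k (k ≥ 2) be pairwise nonadjacent, unlooped twin vertices of G. Then there exist elements α'(v₁), β'(v₁) of R and an element γ of R such that [G] = [(G − v₂ − ... − v_k)'] + γ·[G − v₁ − ... − v_k], where (G − v₂ − ... − v_k)' is obtained from G − v₂ − ... − v_k by changing the weights of v₁ to α'(v₁) and β'(v₁) (and possibly changing the marked status of v₁). -/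
namespace WMG

/-! ### Merging and redistributing the coordinates of a vertex set -/

section Merge

variable {V : Type*} [DecidableEq V] {U : Finset V}

/-- The linear map that collects the sum of the coordinates in `U` at the vertex `v₀ ∈ U`. -/
def collect (U : Finset V) (v₀ : V) : (V → ZMod 2) →ₗ[ZMod 2] (V → ZMod 2) where
  toFun x v := if v ∈ U then (if v = v₀ then ∑ j ∈ U, x j else 0) else x v
  map_add' := by
    intro x y; ext v
    simp only [Pi.add_apply, Finset.sum_add_distrib]; split_ifs <;> simp
  map_smul' := by
    intro c x; ext v
    simp only [Pi.smul_apply, smul_eq_mul, ← Finset.mul_sum]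
    split_ifs <;> simp

/-- Conversely to `collect`, distribute the coordinate at `v₀` over the vertices of `B`: those other
than `b₀` receive prescribed values `z`, and `b₀` receives what makes the sum right. -/
def distribute (U : Finset V) (v₀ : V) (B : Finset V) (b₀ : V) :
    (V → ZMod 2) × ({i // i ∈ B.erase b₀} → ZMod 2) →ₗ[ZMod 2] (V → ZMod 2) where
  toFun p v := if v ∈ U then
    (if v = b₀ then p.1 v₀ - ∑ i, p.2 i else if hv : v ∈ B.erase b₀ then p.2 ⟨v, hv⟩ else 0)
    else p.1 v
  map_add' := by
    intro x y; ext v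
    simp only [Prod.fst_add, Prod.snd_add, Pi.add_apply, Finset.sum_add_distrib]
    split_ifs <;> ring
  map_smul' := by
    intro c x; ext v
    simp only [Prod.smul_fst, Prod.smul_snd, Pi.smul_apply, smul_eq_mul, ← Finset.mul_sum,
      RingHom.id_apply]
    split_ifs <;> ring

lemma collect_apply (v₀ : V) (x : V → ZMod 2) (v : V) :
    collect U v₀ x v = if v ∈ U then (if v = v₀ then ∑ j ∈ U, x j else 0) else x v := rfl

lemma distribute_apply (v₀ : V) (B : Finset V) (b₀ : V)
    (p : (V → ZMod 2) × ({i // i ∈ B.erase b₀} → ZMod 2)) (v : V) :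
    distribute U v₀ B b₀ p v = if v ∈ U then
      (if v = b₀ then p.1 v₀ - ∑ i, p.2 i else if hv : v ∈ B.erase b₀ then p.2 ⟨v, hv⟩ else 0)
      else p.1 v := rfl

lemma sum_distribute (v₀ : V) {B : Finset V} (hB : B ⊆ U) {b₀ : V} (hb : b₀ ∈ B)
    (p : (V → ZMod 2) × ({i // i ∈ B.erase b₀} → ZMod 2)) :
    ∑ j ∈ U, distribute U v₀ B b₀ p j = p.1 v₀ := by
  have h1 : ∑ j ∈ U, distribute U v₀ B b₀ p j = ∑ j ∈ B, distribute U v₀ B b₀ p j := by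
    refine (Finset.sum_subset hB fun j hj hj' => ?_).symm
    rw [distribute_apply, if_pos hj, if_neg (fun (hh : j = b₀) => hj' (hh ▸ hb)),
      dif_neg fun hh => hj' (Finset.mem_of_mem_erase hh)]
  rw [h1, ← Finset.add_sum_erase B _ hb, ← Finset.sum_coe_sort (B.erase b₀)]
  rw [Finset.sum_congr rfl fun (i : {i // i ∈ B.erase b₀}) _ =>
    show distribute U v₀ B b₀ p i = p.2 i from ?_]
  · rw [distribute_apply, if_pos (hB hb), if_pos rfl, sub_add_cancel]
  · rw [distribute_apply, if_pos (hB (Finset.mem_of_mem_erase i.2)),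
      if_neg (Finset.ne_of_mem_erase i.2), dif_pos i.2]

end Merge

/-! ### Kernels in the presence of twins -/

section Kernel

variable {V : Type*} [Fintype V] [DecidableEq V]

/-- The kernel of the principal submatrix of `M + diag(1_T)` on the index set `X`, realised as a
space of vectors on all of `V` that vanish off `X`. -/
def kerOn (M : Matrix V V (ZMod 2)) (X T : Finset V) : Submodule (ZMod 2) (V → ZMod 2) where
  carrier := {x | (∀ i, i ∉ X → x i = 0) ∧
    ∀ i ∈ X, ∑ j, M i j * x j + (if i ∈ T then x i else 0) = 0}
  zero_mem' := by simp
  add_mem' := by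
    rintro x y ⟨hx, hx'⟩ ⟨hy, hy'⟩
    refine ⟨fun i hi => by simp [hx i hi, hy i hi], fun i hi => ?_⟩
    have h1 := hx' i hi
    have h2 := hy' i hi
    simp only [Pi.add_apply, mul_add, Finset.sum_add_distrib]
    split_ifs at h1 h2 ⊢ <;> linear_combination h1 + h2
  smul_mem' := by
    rintro c x ⟨hx, hx'⟩
    refine ⟨fun i hi => by simp [hx i hi], fun i hi => ?_⟩
    have h1 := hx' i hi
    simp only [Pi.smul_apply, smul_eq_mul, mul_left_comm _ c, ← Finset.mul_sum]
    split_ifs at h1 ⊢ <;> linear_combination c * h1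

/-- The nullity of the principal submatrix of `M + diag(1_T)` on the index set `X`. -/
noncomputable def nul (M : Matrix V V (ZMod 2)) (X T : Finset V) : ℕ :=
  Module.finrank (ZMod 2) (kerOn M X T)

/-- The members of `A` that survive in the matrix toggled by `T`, when `mk` is the set of marked
vertices. -/
def keepOn (M : Matrix V V (ZMod 2)) (mk A T : Finset V) : Finset V :=
  A.filter fun x => ¬(x ∈ mk ∧ M x x + (if x ∈ T then 1 else 0) = 0)

/-- The vertices of `U` are pairwise nonadjacent unlooped twins, with `u` as the common adjacency
vector to the vertices outside `U`. -/
structure IsTwins (M : Matrix V V (ZMod 2)) (U : Finset V) (u : V → ZMod 2) : Prop where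
  inner : ∀ i ∈ U, ∀ j ∈ U, M i j = 0
  row : ∀ i ∈ U, ∀ w ∉ U, M i w = u w
  col : ∀ i ∈ U, ∀ w ∉ U, M w i = u w

variable {M : Matrix V V (ZMod 2)} {U : Finset V} {u : V → ZMod 2}

/-- For a twin set `U` the kernel equations see the coordinates in `U` only through their sum
(in the rows outside `U`) and through the diagonal (in the rows of `U`). -/
lemma mem_kerOn (h : IsTwins M U u) (X T : Finset V) (x : V → ZMod 2) :
    x ∈ kerOn M X T ↔ (∀ i, i ∉ X → x i = 0) ∧
      (∀ i ∈ X, i ∈ U → ∑ j ∈ Uᶜ, u j * x j + (if i ∈ T then x i else 0) = 0) ∧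
      (∀ i ∈ X, i ∉ U → u i * ∑ j ∈ U, x j + ∑ j ∈ Uᶜ, M i j * x j +
        (if i ∈ T then x i else 0) = 0) := by
  have h1 : ∀ i ∈ U, ∑ j, M i j * x j = ∑ j ∈ Uᶜ, u j * x j := by
    intro i hi
    rw [← Finset.sum_add_sum_compl U, Finset.sum_eq_zero, zero_add]
    · refine Finset.sum_congr rfl fun j hj => ?_
      rw [h.row i hi j (by simpa using hj)]
    · intro j hj
      rw [h.inner i hi j hj, zero_mul]
  have h2 : ∀ i ∉ U, ∑ j, M i j * x j = u i * ∑ j ∈ U, x j + ∑ j ∈ Uᶜ, M i j * x j := by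
    intro i hi
    rw [← Finset.sum_add_sum_compl U, Finset.mul_sum]
    congr 1
    refine Finset.sum_congr rfl fun j hj => ?_
    rw [h.col j hj i hi]
  change (_ ∧ _) ↔ _
  refine and_congr_right fun _ => ⟨fun H => ⟨fun i hi hU => ?_, fun i hi hU => ?_⟩,
    fun H i hi => ?_⟩
  · rw [← h1 i hU]; exact H i hi
  · rw [← h2 i hU]; exact H i hi
  · by_cases hU : i ∈ U
    · rw [h1 i hU]; exact H.1 i hi hU
    · rw [h2 i hU]; exact H.2 i hi hU

lemma nul_eq_of_maps {X T X' T' : Finset V} (f g : (V → ZMod 2) →ₗ[ZMod 2] (V → ZMod 2))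
    (hf : ∀ x ∈ kerOn M X T, f x ∈ kerOn M X' T' ∧ g (f x) = x)
    (hg : ∀ x ∈ kerOn M X' T', g x ∈ kerOn M X T ∧ f (g x) = x) :
    nul M X T = nul M X' T' := by
  refine LinearEquiv.finrank_eq
    (LinearEquiv.ofLinearMap (f.restrict fun x hx => (hf x hx).1)
      (g.restrict fun x hx => (hg x hx).1) ?_ ?_)
  · ext1 x
    exact Subtype.ext (hg x.1 x.2).2
  · ext1 x
    exact Subtype.ext (hf x.1 x.2).2

lemma sum_if_mem_eq (f g : V → ZMod 2) (c : V → ZMod 2) :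
    ∑ j ∈ Uᶜ, c j * (if j ∈ U then f j else g j) = ∑ j ∈ Uᶜ, c j * g j := by
  refine Finset.sum_congr rfl fun j hj => ?_
  rw [if_neg (by simpa using hj)]

/-- The linear map replacing the coordinates in `U` by `∑ u j * x j` (sum over `j ∉ U`) on `C`
and by `0` elsewhere. -/
def fill (U : Finset V) (u : V → ZMod 2) (C : Finset V) :
    (V → ZMod 2) →ₗ[ZMod 2] (V → ZMod 2) where
  toFun x v := if v ∈ U then (if v ∈ C then ∑ j ∈ Uᶜ, u j * x j else 0) else x v
  map_add' := by
    intro x y; ext v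
    simp only [Pi.add_apply, mul_add, Finset.sum_add_distrib]; split_ifs <;> simp
  map_smul' := by
    intro c x; ext v
    simp only [Pi.smul_apply, smul_eq_mul, mul_left_comm _ c, ← Finset.mul_sum]
    split_ifs <;> simp

lemma fill_apply (C : Finset V) (x : V → ZMod 2) (v : V) :
    fill U u C x v =
      if v ∈ U then (if v ∈ C then ∑ j ∈ Uᶜ, u j * x j else 0) else x v := rfl

/-- If all surviving twins are looped, their equations determine the coordinates in `U` from the
others; only the parity of the number of surviving twins matters for the remaining equations. -/
lemma fill_maps (h : IsTwins M U u) {X T X' T' C C' : Finset V} (hC : C ⊆ U) (hC' : C' ⊆ U)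
    (hX : ∀ i ∈ U, (i ∈ X ↔ i ∈ C)) (hT : C ⊆ T)
    (hX' : ∀ i ∈ U, (i ∈ X' ↔ i ∈ C')) (hT' : C' ⊆ T')
    (hXX : ∀ i ∉ U, (i ∈ X' ↔ i ∈ X)) (hTT : ∀ i ∉ U, (i ∈ T' ↔ i ∈ T))
    (hcard : (C.card : ZMod 2) = C'.card) (x : V → ZMod 2) (hx : x ∈ kerOn M X T) :
    fill U u C' x ∈ kerOn M X' T' ∧ fill U u C (fill U u C' x) = x := by
  have hs : ∀ D ⊆ U, ∀ a : ZMod 2, ∑ j ∈ U, (if j ∈ D then a else 0) = D.card * a := by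
    intro D hD a
    rw [Finset.sum_ite_mem, Finset.inter_eq_right.2 hD, Finset.sum_const, nsmul_eq_mul]
  obtain ⟨h1, h2, h3⟩ := (mem_kerOn h X T x).1 hx
  have key : ∀ i ∈ U, x i = if i ∈ C then ∑ j ∈ Uᶜ, u j * x j else 0 := by
    intro i hi
    by_cases hc : i ∈ C
    · have := h2 i ((hX i hi).2 hc) hi
      rw [if_pos (hT hc)] at this
      rw [if_pos hc]
      exact (CharTwo.add_eq_zero.1 this).symm
    · rw [if_neg hc]; exact h1 i fun hh => hc ((hX i hi).1 hh)
  refine ⟨(mem_kerOn h X' T' _).2 ⟨?_, ?_, ?_⟩, ?_⟩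
  · intro i hi
    rw [fill_apply]
    split_ifs with hU hc
    · exact absurd ((hX' i hU).2 hc) hi
    · rfl
    · exact h1 i fun hh => hi ((hXX i hU).2 hh)
  · intro i hi hU
    have hc := (hX' i hU).1 hi
    simp only [fill_apply, sum_if_mem_eq, hU, hc, hT' hc, if_true]
    exact CharTwo.add_self_eq_zero _
  · intro i hi hU
    have := h3 i ((hXX i hU).1 hi) hU
    rw [Finset.sum_congr rfl key, hs C hC, hcard] at this
    simp only [fill_apply, sum_if_mem_eq, hU, if_false, hTT i hU]
    rw [Finset.sum_congr rfl fun j hj => if_pos hj, hs C' hC']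
    exact this
  · ext v
    rw [fill_apply]
    simp only [fill_apply, sum_if_mem_eq]
    by_cases hU : v ∈ U
    · rw [if_pos hU, ← key v hU]
    · simp [hU]

/-- If all surviving twins are looped, only the parity of their number matters. With `C'` empty or
a single vertex, this deletes an even number of looped twins and merges an odd number into one. -/
lemma nul_looped (h : IsTwins M U u) {X T X' T' C C' : Finset V} (hC : C ⊆ U) (hC' : C' ⊆ U)
    (hX : ∀ i ∈ U, (i ∈ X ↔ i ∈ C)) (hT : C ⊆ T)
    (hX' : ∀ i ∈ U, (i ∈ X' ↔ i ∈ C')) (hT' : C' ⊆ T')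
    (hXX : ∀ i ∉ U, (i ∈ X' ↔ i ∈ X)) (hTT : ∀ i ∉ U, (i ∈ T' ↔ i ∈ T))
    (hcard : (C.card : ZMod 2) = C'.card) : nul M X T = nul M X' T' :=
  nul_eq_of_maps (fill U u C') (fill U u C)
    (fill_maps h hC hC' hX hT hX' hT' hXX hTT hcard)
    (fill_maps h hC' hC hX' hT' hX hT (fun i hi => (hXX i hi).symm)
      (fun i hi => (hTT i hi).symm) hcard.symm)

/-- If some surviving twin is unlooped, the looped twins get coordinate zero, and the unlooped ones
(the set `B`) enter the other equations only through their sum: they can be merged into a single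
unlooped vertex at the cost of `B.card - 1` from the nullity. -/
lemma nul_unlooped (h : IsTwins M U u) {X T X' T' B : Finset V} {v₀ : V} (hv₀ : v₀ ∈ U)
    (hBU : B ⊆ U) (hB : ∀ i ∈ U, (i ∈ B ↔ i ∈ X ∧ i ∉ T)) (hne : B.Nonempty)
    (hX' : ∀ i ∈ U, (i ∈ X' ↔ i = v₀)) (hT' : v₀ ∉ T')
    (hXX : ∀ i ∉ U, (i ∈ X' ↔ i ∈ X)) (hTT : ∀ i ∉ U, (i ∈ T' ↔ i ∈ T)) :
    nul M X T = B.card - 1 + nul M X' T' := by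
  obtain ⟨b₀, hb⟩ := hne
  have hbU := hBU hb
  have hf : ∀ x ∈ kerOn M X T, collect U v₀ x ∈ kerOn M X' T' ∧ ∀ i ∈ U, i ∉ B → x i = 0 := by
    intro x hx
    obtain ⟨h1, h2, h3⟩ := (mem_kerOn h X T x).1 hx
    have hL : ∑ j ∈ Uᶜ, u j * x j = 0 := by
      have := h2 b₀ ((hB b₀ hbU).1 hb).1 hbU
      rwa [if_neg ((hB b₀ hbU).1 hb).2, add_zero] at this
    refine ⟨(mem_kerOn h X' T' _).2 ⟨?_, ?_, ?_⟩, ?_⟩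
    · intro i hi
      rw [collect_apply]
      split_ifs with hU hc
      · exact absurd ((hX' i hU).2 hc) hi
      · rfl
      · exact h1 i fun hh => hi ((hXX i hU).2 hh)
    · intro i hi hU
      have hc := (hX' i hU).1 hi
      subst hc
      rw [if_neg hT', add_zero]
      simp only [collect_apply, sum_if_mem_eq]
      exact hL
    · intro i hi hU
      have := h3 i ((hXX i hU).1 hi) hU
      simp only [collect_apply, sum_if_mem_eq, hU, if_false, hTT i hU]
      rw [Finset.sum_congr rfl fun j hj => if_pos hj, Finset.sum_ite_eq' U v₀, if_pos hv₀]
      exact this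
    · intro i hi hiB
      by_cases hiX : i ∈ X
      · have hiT : i ∈ T := by
          by_contra hiT
          exact hiB ((hB i hi).2 ⟨hiX, hiT⟩)
        have := h2 i hiX hi
        rwa [hL, if_pos hiT, zero_add] at this
      · exact h1 i hiX
  have hg : ∀ x ∈ kerOn M X' T', ∀ z, distribute U v₀ B b₀ (x, z) ∈ kerOn M X T := by
    intro x hx z
    obtain ⟨h1, h2, h3⟩ := (mem_kerOn h X' T' x).1 hx
    have hL : ∑ j ∈ Uᶜ, u j * x j = 0 := by
      have := h2 v₀ ((hX' v₀ hv₀).2 rfl) hv₀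
      rwa [if_neg hT', add_zero] at this
    have hx0 : ∑ j ∈ U, x j = x v₀ :=
      Finset.sum_eq_single_of_mem v₀ hv₀ fun j hj hne => h1 j fun hh => hne ((hX' j hj).1 hh)
    have hnB : ∀ i ∈ U, i ∉ B → distribute U v₀ B b₀ (x, z) i = 0 := by
      intro i hi hiB
      rw [distribute_apply, if_pos hi, if_neg (fun (hh : i = b₀) => hiB (hh ▸ hb)),
        dif_neg fun hh => hiB (Finset.mem_of_mem_erase hh)]
    refine (mem_kerOn h X T _).2 ⟨?_, ?_, ?_⟩
    · intro i hi
      by_cases hU : i ∈ U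
      · exact hnB i hU fun hh => hi ((hB i hU).1 hh).1
      · rw [distribute_apply, if_neg hU]
        exact h1 i fun hh => hi ((hXX i hU).1 hh)
    · intro i hi hU
      have : (if i ∈ T then distribute U v₀ B b₀ (x, z) i else 0) = 0 := by
        split_ifs with hiT
        · exact hnB i hU fun hh => ((hB i hU).1 hh).2 hiT
        · rfl
      rw [this, add_zero]
      simp only [distribute_apply, sum_if_mem_eq]
      exact hL
    · intro i hi hU
      have := h3 i ((hXX i hU).2 hi) hU
      rw [sum_distribute v₀ hBU hb]
      simp only [distribute_apply, sum_if_mem_eq, hU, if_false, ← hTT i hU]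
      rw [hx0] at this
      exact this
  let F : kerOn M X T →ₗ[ZMod 2] kerOn M X' T' × ({i // i ∈ B.erase b₀} → ZMod 2) :=
    ((collect U v₀).restrict fun x hx => (hf x hx).1).prod
      ((LinearMap.funLeft (ZMod 2) (ZMod 2) fun i : {i // i ∈ B.erase b₀} => i.1).comp
        (kerOn M X T).subtype)
  let D : kerOn M X' T' × ({i // i ∈ B.erase b₀} → ZMod 2) →ₗ[ZMod 2] kerOn M X T :=
    ((distribute U v₀ B b₀).comp (((kerOn M X' T').subtype).prodMap LinearMap.id)).codRestrict _
      fun p => hg p.1.1 p.1.2 p.2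
  have hFD : ∀ p, F (D p) = p := by
    rintro ⟨⟨x, hx⟩, z⟩
    obtain ⟨h1, -, -⟩ := (mem_kerOn h X' T' x).1 hx
    refine Prod.ext (Subtype.ext ?_) ?_
    · change collect U v₀ (distribute U v₀ B b₀ (x, z)) = x
      ext v
      rw [collect_apply, sum_distribute v₀ hBU hb]
      split_ifs with hU hv
      · rw [hv]
      · exact (h1 v fun hh => hv ((hX' v hU).1 hh)).symm
      · rw [distribute_apply, if_neg hU]
    · ext i
      change distribute U v₀ B b₀ (x, z) i.1 = z i
      rw [distribute_apply, if_pos (hBU (Finset.mem_of_mem_erase i.2)),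
        if_neg (Finset.ne_of_mem_erase i.2), dif_pos i.2]
  have hDF : ∀ x, D (F x) = x := by
    rintro ⟨x, hx⟩
    have h0 := (hf x hx).2
    refine Subtype.ext ?_
    change distribute U v₀ B b₀ (collect U v₀ x, fun i => x i.1) = x
    ext v
    rw [distribute_apply]
    dsimp only
    split_ifs with hU hv hv'
    · subst hv
      rw [Finset.sum_coe_sort (B.erase v) x, collect_apply, if_pos hv₀, if_pos rfl,
        ← Finset.sum_subset hBU h0, ← Finset.add_sum_erase B _ hb, add_sub_cancel_right]
    · rfl
    · exact (h0 v hU fun hh => hv' (Finset.mem_erase.2 ⟨hv, hh⟩)).symm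
    · rw [collect_apply, if_neg hU]
  have := LinearEquiv.finrank_eq (LinearEquiv.ofLinearMap F D (LinearMap.ext hFD)
    (LinearMap.ext hDF))
  rw [Module.finrank_prod, Module.finrank_fintype_fun_eq_card, Fintype.card_coe,
    Finset.card_erase_of_mem hb] at this
  rw [nul, nul, this, add_comm]

end Kernel

/-! ### The bracket as a sum over states of the twins and of the other vertices -/

section Bracket

variable {V V' : Type*} [Fintype V] [DecidableEq V] [Fintype V'] [DecidableEq V']

/-- The nullity of a graph embedded in an ambient vertex set `V` is the dimension of the
corresponding space of vectors on `V`. -/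
lemma nullity_eq_nul {R : Type*} (H : WMG R V') (e : V' ↪ V) (M : Matrix V V (ZMod 2))
    (hM : H.adj = M.submatrix e e) (T : Finset V') :
    H.nullity T = nul M ((H.keep T).map e) (T.map e) := by
  set K := H.keep T
  set N : Matrix {x // x ∈ K} {x // x ∈ K} (ZMod 2) :=
    (H.adjT T).submatrix (fun i : {x // x ∈ K} => i.1) (fun j : {x // x ∈ K} => j.1) with hN
  have hrank := LinearMap.finrank_range_add_finrank_ker N.mulVecLin
  rw [Module.finrank_fintype_fun_eq_card] at hrank
  have hnull : H.nullity T = Module.finrank (ZMod 2) (LinearMap.ker N.mulVecLin) := by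
    change Fintype.card _ - Module.finrank (ZMod 2) (LinearMap.range N.mulVecLin) = _
    rw [← hrank, Nat.add_sub_cancel_left]
  have hsum : ∀ x : V → ZMod 2, (∀ i, i ∉ K.map e → x i = 0) → ∀ i : {x // x ∈ K},
      (N.mulVec fun j => x (e j.1)) i =
        ∑ j, M (e i.1) j * x j + (if e i.1 ∈ T.map e then x (e i.1) else 0) := by
    intro x hx i
    have h1 : ∑ j, M (e i.1) j * x j = ∑ j ∈ K.map e, M (e i.1) j * x j := by
      refine (Finset.sum_subset (Finset.subset_univ _) fun j _ hj => ?_).symm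
      rw [hx j hj, mul_zero]
    rw [h1, Finset.sum_map, ← Finset.sum_coe_sort K]
    simp only [Matrix.mulVec, dotProduct, hN, Matrix.submatrix_apply, adjT, Matrix.of_apply, hM,
      add_mul, Finset.sum_add_distrib, Finset.mem_map']
    congr 1
    rw [Finset.sum_eq_single i]
    · simp
    · intro j _ hj
      rw [if_neg fun hh => hj (Subtype.ext hh.1.symm), zero_mul]
    · simp
  rw [hnull, nul]
  let ψ : (V → ZMod 2) →ₗ[ZMod 2] ({x // x ∈ K} → ZMod 2) :=
    LinearMap.funLeft (ZMod 2) (ZMod 2) fun j : {x // x ∈ K} => e j.1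
  let r : kerOn M (K.map e) (T.map e) →ₗ[ZMod 2] LinearMap.ker N.mulVecLin :=
    ψ.restrict (by
      intro x hx
      rw [LinearMap.mem_ker]
      ext i
      change (N.mulVec fun j => x (e j.1)) i = 0
      rw [hsum x hx.1]
      exact hx.2 _ (Finset.mem_map_of_mem e i.2))
  refine (LinearEquiv.finrank_eq (LinearEquiv.ofBijective r ⟨?_, ?_⟩)).symm
  · rintro ⟨x, hx⟩ ⟨y, hy⟩ hxy
    have hxy' : ∀ j : {x // x ∈ K}, x (e j.1) = y (e j.1) :=
      fun j => congrFun (congrArg Subtype.val hxy) j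
    refine Subtype.ext (funext fun v => ?_)
    by_cases hv : v ∈ K.map e
    · obtain ⟨w, hw, rfl⟩ := Finset.mem_map.1 hv
      exact hxy' ⟨w, hw⟩
    · exact (hx.1 v hv).trans (hy.1 v hv).symm
  · rintro ⟨y, hy⟩
    -- extension of `y` by zero
    let x : V → ZMod 2 := Function.extend (fun j : {x // x ∈ K} => e j.1) y 0
    have hinj : Function.Injective fun j : {x // x ∈ K} => e j.1 :=
      e.injective.comp Subtype.val_injective
    have hxy : (fun j : {x // x ∈ K} => x (e j.1)) = y :=
      funext fun j => hinj.extend_apply y 0 j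
    have hx0 : ∀ i, i ∉ K.map e → x i = 0 := by
      intro i hi
      refine Function.extend_apply' _ _ _ ?_
      rintro ⟨j, rfl⟩
      exact hi (Finset.mem_map_of_mem e j.2)
    refine ⟨⟨x, hx0, ?_⟩, Subtype.ext hxy⟩
    intro i hi
    obtain ⟨w, hw, rfl⟩ := Finset.mem_map.1 hi
    rw [← hsum x hx0 ⟨w, hw⟩, hxy]
    exact congrFun hy ⟨w, hw⟩

/-- The bracket of a graph embedded in an ambient vertex set as `U ∪ W`, written as a double sum
over the parts of the state `T` in `U` and in `W`. -/
lemma bracket_expand {R : Type*} [CommRing R] (d : Rˣ) (H : WMG R V') (e : V' ↪ V)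
    (M : Matrix V V (ZMod 2)) (hM : H.adj = M.submatrix e e) (mk : Finset V)
    (hmk : ∀ x, x ∈ H.marked ↔ e x ∈ mk) (α β : V → R) (hα : ∀ x, H.alpha x = α (e x))
    (hβ : ∀ x, H.beta x = β (e x)) (U W : Finset V) (hUW : Disjoint U W)
    (huniv : Finset.univ.map e = U ∪ W) :
    H.bracket d = (d : R) ^ H.phi * ∑ A ∈ U.powerset, ∑ T ∈ W.powerset,
      ((∏ x ∈ U \ A, α x) * ∏ x ∈ A, β x) * ((∏ x ∈ W \ T, α x) * ∏ x ∈ T, β x) *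
        (d : R) ^ nul M (keepOn M mk (U ∪ W) (A ∪ T)) (A ∪ T) := by
  rw [bracket, ← Finset.sum_product']
  congr 1
  have hmem : ∀ v, v ∈ U ∪ W ↔ ∃ x, e x = v := by
    intro v; rw [← huniv]; simp
  refine Finset.sum_bij (fun T _ => (T.map e ∩ U, T.map e ∩ W)) ?_ ?_ ?_ ?_
  · intro T _
    simp
  · intro T₁ _ T₂ _ hT
    rw [Prod.mk.injEq] at hT
    have hT' : ∀ T : Finset V', T.map e = (T.map e ∩ U) ∪ (T.map e ∩ W) := by
      intro T
      rw [← Finset.inter_union_distrib_left, ← huniv, eq_comm, Finset.inter_eq_left]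
      exact Finset.map_subset_map.2 (Finset.subset_univ _)
    refine Finset.map_injective e ?_
    rw [hT' T₁, hT' T₂, hT.1, hT.2]
  · rintro ⟨A, T⟩ hAT
    simp only [Finset.mem_product, Finset.mem_powerset] at hAT
    obtain ⟨P, hP⟩ : ∃ P : Finset V', P.map e = A ∪ T := by
      have : A ∪ T ⊆ Finset.univ.map e := by
        rw [huniv]; exact Finset.union_subset_union hAT.1 hAT.2
      obtain ⟨P, -, hP⟩ := Finset.subset_map_iff.1 this
      exact ⟨P, hP.symm⟩
    refine ⟨P, Finset.mem_univ _, ?_⟩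
    rw [hP, Prod.mk.injEq]
    have h1 := Finset.disjoint_left.1 hUW
    constructor
    · ext v
      have := @hAT.1 v; have := @hAT.2 v; have := @h1 v
      simp only [Finset.mem_inter, Finset.mem_union]; tauto
    · ext v
      have := @hAT.1 v; have := @hAT.2 v; have := @h1 v
      simp only [Finset.mem_inter, Finset.mem_union]; tauto
  · intro T _
    have hdis : Disjoint (T.map e ∩ U) (T.map e ∩ W) :=
      hUW.mono Finset.inter_subset_right Finset.inter_subset_right
    have hunion : (T.map e ∩ U) ∪ (T.map e ∩ W) = T.map e := by
      rw [← Finset.inter_union_distrib_left, ← huniv, Finset.inter_eq_left]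
      exact Finset.map_subset_map.2 (Finset.subset_univ _)
    have hβ' : ∏ t ∈ T, H.beta t = (∏ x ∈ T.map e ∩ U, β x) * ∏ x ∈ T.map e ∩ W, β x := by
      rw [← Finset.prod_union hdis, hunion, Finset.prod_map]
      exact Finset.prod_congr rfl fun x _ => hβ x
    have hα' : ∏ t ∈ Tᶜ, H.alpha t =
        (∏ x ∈ U \ (T.map e ∩ U), α x) * ∏ x ∈ W \ (T.map e ∩ W), α x := by
      rw [← Finset.prod_union (hUW.mono Finset.sdiff_subset Finset.sdiff_subset)]
      have : (U \ (T.map e ∩ U)) ∪ (W \ (T.map e ∩ W)) = Tᶜ.map e := by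
        ext v
        have := hmem v
        simp only [Finset.mem_union, Finset.mem_sdiff, Finset.mem_inter, Finset.mem_map,
          Finset.mem_compl] at this ⊢
        constructor
        · intro hv
          obtain ⟨x, rfl⟩ := this.1 (by tauto)
          refine ⟨x, fun hx => ?_, rfl⟩
          have hex : ∃ a ∈ T, e a = e x := ⟨x, hx, rfl⟩
          rcases hv with ⟨hv, hv'⟩ | ⟨hv, hv'⟩ <;> exact hv' ⟨hex, hv⟩
        · rintro ⟨x, hx, rfl⟩
          have h2 : ¬ ∃ a ∈ T, e a = e x := by
            rintro ⟨a, ha, hax⟩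
            exact hx (e.injective hax ▸ ha)
          exact (this.2 ⟨x, rfl⟩).imp (fun hv => ⟨hv, fun hh => h2 hh.1⟩)
            fun hv => ⟨hv, fun hh => h2 hh.1⟩
      rw [this, Finset.prod_map]
      exact Finset.prod_congr rfl fun x _ => hα x
    have hkeep : (H.keep T).map e = keepOn M mk (U ∪ W) (T.map e) := by
      ext v
      simp only [Finset.mem_map, keepOn, Finset.mem_filter, hmem]
      have hx : ∀ x, x ∈ H.keep T ↔
          ¬(e x ∈ mk ∧ M (e x) (e x) + (if e x ∈ T.map e then 1 else 0) = 0) := by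
        intro x
        simp [keep, adjT, hM, hmk]
      constructor
      · rintro ⟨x, hxk, rfl⟩
        exact ⟨⟨x, rfl⟩, by simpa using (hx x).1 hxk⟩
      · rintro ⟨⟨x, rfl⟩, hxk⟩
        exact ⟨x, (hx x).2 (by simpa using hxk), rfl⟩
    rw [hunion, ← hkeep, ← nullity_eq_nul H e M hM, hα', hβ']
    ring

end Bracket

/-! ### The nullity for a fixed state of the twins -/

section Bracket

variable {V : Type*} [Fintype V] [DecidableEq V] {M : Matrix V V (ZMod 2)} {U : Finset V}
  {u : V → ZMod 2}

lemma mem_keepOn_congr {mk mk' A A' T T' : Finset V} {i : V} (hmk : i ∈ mk ↔ i ∈ mk')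
    (hA : i ∈ A ↔ i ∈ A') (hT : i ∈ T ↔ i ∈ T') :
    i ∈ keepOn M mk A T ↔ i ∈ keepOn M mk' A' T' := by
  simp only [keepOn, Finset.mem_filter, hmk, hA, hT]

lemma mem_keepOn_of_diag {mk A T : Finset V} {i : V} (hA : i ∈ A) (hi : M i i = 0) :
    i ∈ keepOn M mk A T ↔ (i ∈ mk → i ∈ T) := by
  simp [keepOn, hA, hi]

/-- The number of surviving unlooped twins when exactly the twins in `A` are toggled. -/
def numUnlooped (U mk A : Finset V) : ℕ := ((U \ A) \ mk).card

/-- For a fixed state `A` of the twins, the nullity is, up to an additive constant, that of the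
graph with the twins replaced by one unlooped twin, by one looped twin, or by none. -/
lemma nul_twins (h : IsTwins M U u) {v₀ : V} (hv₀ : v₀ ∈ U) (mk : Finset V) {A T : Finset V}
    (hA : A ⊆ U) (hT : T ⊆ Uᶜ) :
    nul M (keepOn M mk (U ∪ Uᶜ) (A ∪ T)) (A ∪ T) =
      if numUnlooped U mk A = 0 then
        (if (A.card : ZMod 2) = 0 then nul M (keepOn M mk (∅ ∪ Uᶜ) (∅ ∪ T)) (∅ ∪ T)
          else nul M (keepOn M (mk.erase v₀) ({v₀} ∪ Uᶜ) ({v₀} ∪ T)) ({v₀} ∪ T))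
      else numUnlooped U mk A - 1 +
        nul M (keepOn M (mk.erase v₀) ({v₀} ∪ Uᶜ) (∅ ∪ T)) (∅ ∪ T) := by
  have hTU : ∀ i ∈ U, i ∉ T := fun i hi hh => by simpa [hi] using hT hh
  have hAT : ∀ i ∈ U, (i ∈ A ∪ T ↔ i ∈ A) := fun i hi => by simp [hTU i hi]
  have hA' : ∀ i ∉ U, i ∉ A := fun i hi hh => hi (hA hh)
  have hX : ∀ i ∈ U, (i ∈ keepOn M mk (U ∪ Uᶜ) (A ∪ T) ↔ (i ∈ mk → i ∈ A)) := fun i hi => by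
    rw [mem_keepOn_of_diag (by simp) (h.inner i hi i hi), hAT i hi]
  have hne : ∀ i ∉ U, i ≠ v₀ := fun i hi hh => hi (hh ▸ hv₀)
  have hX' : ∀ P : Finset V, ∀ i ∈ U,
      (i ∈ keepOn M (mk.erase v₀) ({v₀} ∪ Uᶜ) (P ∪ T) ↔ i ∈ ({v₀} : Finset V)) := by
    intro P i hi
    by_cases hiv : i = v₀
    · subst hiv
      rw [mem_keepOn_of_diag (by simp) (h.inner i hi i hi)]
      simp
    · simp [keepOn, hiv, hi]
  split_ifs with h0 hc
  · have hall : ∀ i ∈ U, (i ∈ keepOn M mk (U ∪ Uᶜ) (A ∪ T) ↔ i ∈ A) := by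
      intro i hi
      have : i ∉ (U \ A) \ mk := by
        rw [Finset.card_eq_zero.1 h0]; exact Finset.notMem_empty i
      simp only [Finset.mem_sdiff, hi, true_and] at this
      rw [hX i hi]; tauto
    refine nul_looped h (C := A) (C' := ∅) hA (Finset.empty_subset _) hall
      Finset.subset_union_left ?_ (Finset.empty_subset _) ?_ ?_ (by simpa using hc)
    · intro i hi
      simp [keepOn, hi]
    · intro i hi
      exact mem_keepOn_congr Iff.rfl (by simp [hi]) (by simp [hA' i hi])
    · intro i hi
      simp [hA' i hi]
  · have hall : ∀ i ∈ U, (i ∈ keepOn M mk (U ∪ Uᶜ) (A ∪ T) ↔ i ∈ A) := by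
      intro i hi
      have : i ∉ (U \ A) \ mk := by
        rw [Finset.card_eq_zero.1 h0]; exact Finset.notMem_empty i
      simp only [Finset.mem_sdiff, hi, true_and] at this
      rw [hX i hi]; tauto
    have hc1 : (A.card : ZMod 2) = 1 := Fin.eq_one_of_ne_zero _ hc
    refine nul_looped h (C := A) (C' := {v₀}) hA (by simpa using hv₀) hall
      Finset.subset_union_left (hX' {v₀}) Finset.subset_union_left ?_ ?_ (by simpa using hc1)
    · intro i hi
      exact mem_keepOn_congr (by simp [hne i hi]) (by simp [hi])
        (by simp [hA' i hi, hne i hi])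
    · intro i hi
      simp [hA' i hi, hne i hi]
  · refine nul_unlooped h (B := (U \ A) \ mk) hv₀ ?_ ?_ ?_ ?_ ?_ ?_ ?_
    · exact Finset.sdiff_subset.trans Finset.sdiff_subset
    · intro i hi
      rw [hX i hi, hAT i hi]
      simp only [Finset.mem_sdiff, hi, true_and]
      tauto
    · exact Finset.card_ne_zero.1 h0
    · intro i hi
      rw [hX' ∅ i hi, Finset.mem_singleton]
    · simpa using hTU v₀ hv₀
    · intro i hi
      exact mem_keepOn_congr (by simp [hne i hi]) (by simp [hi]) (by simp [hA' i hi])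
    · intro i hi
      simp [hA' i hi]

end Bracket

end WMG

theorem nonadjacent_twins_general {R : Type*} [CommRing R] (d : Rˣ) {V : Type*}
    [Fintype V] [DecidableEq V]
    (G : WMG R V) (n : ℕ) (hk : 2 ≤ n + 1) (vtx : Fin (n + 1) → V)
    (hinj : Function.Injective vtx)
    (hloop : ∀ i, G.adj (vtx i) (vtx i) = 0)
    (hnonadj : ∀ i j, i ≠ j → G.adj (vtx i) (vtx j) = 0)
    (htwin : ∀ i j, ∀ w : V, w ∉ Set.range vtx → G.adj (vtx i) w = G.adj (vtx j) w)
    (S Sall : Finset V)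
    (hS : S = (Finset.univ.filter fun i => i ≠ (0 : Fin (n + 1))).image vtx)
    (hSall : Sall = Finset.univ.image vtx) :
    ∃ (α' β' γ : R) (G' : WMG R {x : V // x ∉ S}),
      G'.adj = (G.delete S).adj ∧ G'.phi = G.phi ∧
      (∀ x : {x : V // x ∉ S}, (x : V) ≠ vtx 0 →
        ((x ∈ G'.marked ↔ (x : V) ∈ G.marked) ∧
          G'.alpha x = G.alpha x ∧ G'.beta x = G.beta x)) ∧
      (∀ x : {x : V // x ∉ S}, (x : V) = vtx 0 → G'.alpha x = α' ∧ G'.beta x = β') ∧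
      G.bracket d = G'.bracket d + γ * (G.delete Sall).bracket d := by
  classical
  have hv₀ : vtx 0 ∈ Sall := by rw [hSall]; simp
  have hSv : ∀ v, v ∉ S ↔ v = vtx 0 ∨ v ∉ Sall := by
    intro v
    rw [hS, hSall]
    simp only [Finset.mem_image, Finset.mem_filter, Finset.mem_univ, true_and]
    constructor
    · intro hv
      by_contra! hcon
      obtain ⟨i, hi⟩ := hcon.2
      refine hv ⟨i, fun h0 => hcon.1 ?_, hi⟩
      rw [← hi, h0]
    · rintro (rfl | hv) ⟨i, hi, hiv⟩
      · exact hi (hinj hiv)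
      · exact hv ⟨i, hiv⟩
  have htw : WMG.IsTwins G.adj Sall (G.adj (vtx 0)) := by
    have hrow : ∀ i ∈ Sall, ∀ w ∉ Sall, G.adj i w = G.adj (vtx 0) w := by
      intro i hi w hw
      rw [hSall] at hi hw
      obtain ⟨i, -, rfl⟩ := Finset.mem_image.1 hi
      exact htwin i 0 w (by simpa using hw)
    refine ⟨?_, hrow, ?_⟩
    · intro i hi j hj
      rw [hSall] at hi hj
      obtain ⟨i, -, rfl⟩ := Finset.mem_image.1 hi
      obtain ⟨j, -, rfl⟩ := Finset.mem_image.1 hj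
      by_cases hij : i = j
      · rw [hij]; exact hloop j
      · exact hnonadj i j hij
    · intro i hi w hw
      rw [← hrow i hi w hw]
      exact G.symm.apply i w
  -- the weights of a state of the twins and of a state of the other vertices
  let wt : Finset V → R := fun A => (∏ x ∈ Sall \ A, G.alpha x) * ∏ x ∈ A, G.beta x
  let wt' : Finset V → R := fun T => (∏ x ∈ Sallᶜ \ T, G.alpha x) * ∏ x ∈ T, G.beta x
  -- coefficients of the three possible replacements for the twins in the state `A`
  let cα : Finset V → R := fun A => if WMG.numUnlooped Sall G.marked A = 0 then 0
    else (d : R) ^ (WMG.numUnlooped Sall G.marked A - 1)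
  let cβ : Finset V → R := fun A => if WMG.numUnlooped Sall G.marked A = 0 then
    (if (A.card : ZMod 2) = 0 then 0 else 1) else 0
  let cγ : Finset V → R := fun A => if WMG.numUnlooped Sall G.marked A = 0 then
    (if (A.card : ZMod 2) = 0 then 1 else 0) else 0
  let α' : R := ∑ A ∈ Sall.powerset, wt A * cα A
  let β' : R := ∑ A ∈ Sall.powerset, wt A * cβ A
  let γ : R := ∑ A ∈ Sall.powerset, wt A * cγ A
  let αf : V → R := Function.update G.alpha (vtx 0) α'
  let βf : V → R := Function.update G.beta (vtx 0) β'
  let G' : WMG R {x : V // x ∉ S} :=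
    { adj := (G.delete S).adj
      symm := (G.delete S).symm
      marked := (G.marked.erase (vtx 0)).subtype fun x => x ∉ S
      alpha := fun x => αf x
      beta := fun x => βf x
      phi := G.phi }
  refine ⟨α', β', γ, G', rfl, rfl, ?_, ?_, ?_⟩
  · intro x hx
    refine ⟨?_, Function.update_of_ne hx _ _, Function.update_of_ne hx _ _⟩
    simp [G', hx]
  · intro x hx
    constructor
    · change αf x = α'
      rw [hx]; exact Function.update_self _ _ _
    · change βf x = β'
      rw [hx]; exact Function.update_self _ _ _
  have e1 := WMG.bracket_expand d G (Function.Embedding.refl V) G.adj (by rfl) G.marked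
    (fun _ => Iff.rfl) G.alpha G.beta (fun _ => rfl) (fun _ => rfl) Sall Sallᶜ
    disjoint_compl_right (by simp)
  have e2 := WMG.bracket_expand d G' (Function.Embedding.subtype _) G.adj (by rfl)
    (G.marked.erase (vtx 0)) (fun _ => by simp [G']) αf βf (fun _ => rfl) (fun _ => rfl) {vtx 0}
    Sallᶜ (by simpa using hv₀) (by ext v; simp [hSv])
  have e3 := WMG.bracket_expand d (G.delete Sall) (Function.Embedding.subtype _) G.adj (by rfl)
    G.marked (fun _ => by simp [WMG.delete]) G.alpha G.beta (fun _ => rfl) (fun _ => rfl) ∅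
    Sallᶜ (by simp) (by ext v; simp)
  have hw : ∀ T ∈ Sallᶜ.powerset,
      (∏ x ∈ Sallᶜ \ T, αf x) * ∏ x ∈ T, βf x = wt' T := by
    intro T hT
    have hne : ∀ x ∈ Sallᶜ, x ≠ vtx 0 := fun x hx hh => by simp [hh, hv₀] at hx
    exact congrArg₂ _
      (Finset.prod_congr rfl fun x hx => Function.update_of_ne
        (hne x (Finset.sdiff_subset hx)) _ _)
      (Finset.prod_congr rfl fun x hx => Function.update_of_ne
        (hne x (Finset.mem_powerset.1 hT hx)) _ _)
  have hα₀ : αf (vtx 0) = α' := Function.update_self _ _ _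
  have hβ₀ : βf (vtx 0) = β' := Function.update_self _ _ _
  have hp : ({vtx 0} : Finset V).powerset = {∅, {vtx 0}} := rfl
  rw [e1, e2, e3, hp, Finset.sum_pair (Finset.singleton_ne_empty _).symm, Finset.powerset_empty,
    Finset.sum_singleton]
  change (d : R) ^ G.phi * _ = (d : R) ^ G.phi * _ + γ * ((d : R) ^ G.phi * _)
  rw [mul_left_comm γ, ← mul_add]
  congr 1
  rw [Finset.sum_comm, Finset.mul_sum, ← Finset.sum_add_distrib, ← Finset.sum_add_distrib]
  refine Finset.sum_congr rfl fun T hT => ?_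
  rw [hw T hT]
  simp only [Finset.sdiff_empty, Finset.sdiff_self, Finset.prod_singleton, Finset.prod_empty,
    one_mul, mul_one, hα₀, hβ₀, α', β', γ, Finset.sum_mul, ← Finset.sum_add_distrib]
  refine Finset.sum_congr rfl fun A hA => ?_
  rw [WMG.nul_twins htw hv₀ G.marked (Finset.mem_powerset.1 hA) (Finset.mem_powerset.1 hT)]
  simp only [cα, cβ, cγ, wt, wt']
  split_ifs
  · ring
  · ring
  · rw [pow_add]; ring
end

section
/- Let G be a weighted marked graph over R, let v be an unlooped, marked vertex of G, and suppose no neighbor of v is marked. Then [G] = α(v)·[G − v] + β(v)·[G^v − v], where G^v is the local complement of G at v. -/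
namespace WMG

variable {R : Type*} {V : Type*}

/-! ### Nullity as the dimension of a null space -/

/-- The null space of `𝒜(G)_T`, realised inside `V → ZMod 2` by extending vectors by zero at the
deleted vertices. -/
def nullSpace [Fintype V] [DecidableEq V] (G : WMG R V) (T : Finset V) :
    Submodule (ZMod 2) (V → ZMod 2) where
  carrier := {x | ∀ i, (i ∈ G.keep T → ∑ j, G.adjT T i j * x j = 0) ∧ (i ∉ G.keep T → x i = 0)}
  add_mem' := by
    intro a b ha hb i
    refine ⟨fun h => ?_, fun h => ?_⟩
    · simp [mul_add, Finset.sum_add_distrib, (ha i).1 h, (hb i).1 h]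
    · simp [(ha i).2 h, (hb i).2 h]
  zero_mem' := by simp
  smul_mem' := by
    intro c a ha i
    refine ⟨fun h => ?_, fun h => ?_⟩
    · simp [mul_left_comm _ c, ← Finset.mul_sum, (ha i).1 h]
    · simp [(ha i).2 h]

lemma mem_nullSpace [Fintype V] [DecidableEq V] {G : WMG R V} {T : Finset V} {x : V → ZMod 2} :
    x ∈ G.nullSpace T ↔
      ∀ i, (i ∈ G.keep T → ∑ j, G.adjT T i j * x j = 0) ∧ (i ∉ G.keep T → x i = 0) := Iff.rfl

/-- The sum over all vertices may be restricted to a set `s` supporting `x`. -/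
lemma sum_eq_sum_keep [Fintype V] [DecidableEq V] {s : Finset V} {x : V → ZMod 2}
    (hx : ∀ i, i ∉ s → x i = 0) (f : V → ZMod 2) :
    ∑ j, f j * x j = ∑ j : {j // j ∈ s}, f j.1 * x j.1 := by
  rw [Finset.sum_coe_sort s (fun j => f j * x j)]
  symm
  apply Finset.sum_subset (Finset.subset_univ _)
  intro i _ hi
  simp [hx i hi]

lemma nullity_eq_finrank [Fintype V] [DecidableEq V] (G : WMG R V) (T : Finset V) :
    G.nullity T = Module.finrank (ZMod 2) (G.nullSpace T) := by
  unfold nullity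
  set M := (G.adjT T).submatrix (fun i : {x // x ∈ G.keep T} => i.1)
      (fun j : {x // x ∈ G.keep T} => j.1) with hM
  have h1 := LinearMap.finrank_range_add_finrank_ker M.mulVecLin
  rw [Module.finrank_fintype_fun_eq_card] at h1
  have hmem : ∀ x : V → ZMod 2, x ∈ G.nullSpace T →
      (fun i : {x // x ∈ G.keep T} => x i.1) ∈ LinearMap.ker M.mulVecLin := by
    intro x hx
    rw [LinearMap.mem_ker]
    funext i
    have := (hx i.1).1 i.2
    rw [sum_eq_sum_keep (fun i => (hx i).2)] at this
    simpa [hM, Matrix.mulVec, dotProduct] using this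
  let f : G.nullSpace T →ₗ[ZMod 2] LinearMap.ker M.mulVecLin :=
    { toFun := fun x => ⟨fun i => x.1 i.1, hmem x.1 x.2⟩
      map_add' := fun _ _ => rfl
      map_smul' := fun _ _ => rfl }
  have hf : Function.Bijective f := by
    constructor
    · intro x y hxy
      ext i
      by_cases hi : i ∈ G.keep T
      · exact congrFun (congrArg Subtype.val hxy) ⟨i, hi⟩
      · rw [(x.2 i).2 hi, (y.2 i).2 hi]
    · rintro ⟨y, hy⟩
      have hz : ∀ i, i ∉ G.keep T →
          (fun i => if h : i ∈ G.keep T then y ⟨i, h⟩ else 0 : V → ZMod 2) i = 0 :=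
        fun i hi => by simp [hi]
      refine ⟨⟨fun i => if h : i ∈ G.keep T then y ⟨i, h⟩ else 0, fun i => ⟨fun hi => ?_, hz i⟩⟩, ?_⟩
      · rw [sum_eq_sum_keep hz]
        rw [LinearMap.mem_ker] at hy
        have := congrFun hy ⟨i, hi⟩
        simpa [hM, Matrix.mulVec, dotProduct] using this
      · ext i
        simp [f]
  have h2 := (LinearEquiv.ofBijective f hf).finrank_eq
  unfold Matrix.rank
  omega

/-- A space of vectors on `V` that is the graph, over a space `K'` of vectors on `V \ {v}`, of the
linear functional with coefficients `c` has the same dimension as `K'`. -/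
lemma finrank_eq_of_graph [Fintype V] [DecidableEq V] (v : V)
    (K : Submodule (ZMod 2) (V → ZMod 2))
    (K' : Submodule (ZMod 2) ({x : V // x ∉ ({v} : Finset V)} → ZMod 2))
    (c : {x : V // x ∉ ({v} : Finset V)} → ZMod 2)
    (h : ∀ x, x ∈ K ↔ x v = ∑ w, c w * x w.1 ∧ (fun w => x w.1) ∈ K') :
    Module.finrank (ZMod 2) K = Module.finrank (ZMod 2) K' := by
  let f : K →ₗ[ZMod 2] K' :=
    { toFun := fun x => ⟨fun w => x.1 w.1, ((h x.1).1 x.2).2⟩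
      map_add' := fun _ _ => rfl
      map_smul' := fun _ _ => rfl }
  have hf : Function.Bijective f := by
    constructor
    · intro x y hxy
      have hw : ∀ w : {x : V // x ∉ ({v} : Finset V)}, x.1 w.1 = y.1 w.1 :=
        fun w => congrFun (congrArg Subtype.val hxy) w
      ext i
      by_cases hi : i = v
      · rw [hi, ((h x.1).1 x.2).1, ((h y.1).1 y.2).1]
        simp only [hw]
      · exact hw ⟨i, by simpa using hi⟩
    · rintro ⟨y, hy⟩
      have hw : ∀ w : {x : V // x ∉ ({v} : Finset V)},
          (fun i => if h : i ∉ ({v} : Finset V) then y ⟨i, h⟩ else ∑ w, c w * y w : V → ZMod 2) w.1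
            = y w := fun w => by simp only [dif_pos w.2]
      refine ⟨⟨fun i => if h : i ∉ ({v} : Finset V) then y ⟨i, h⟩ else ∑ w, c w * y w,
        (h _).2 ⟨?_, ?_⟩⟩, ?_⟩
      · simp only [hw]
        simp
      · simp only [hw]
        exact hy
      · ext w
        exact hw w
  exact (LinearEquiv.ofBijective f hf).finrank_eq

/-! ### Splitting sums over vertices and over vertex sets -/

lemma sum_split [Fintype V] [DecidableEq V] {M : Type*} [AddCommMonoid M] (v : V) (f : V → M) :
    ∑ j, f j = f v + ∑ w : {x : V // x ∉ ({v} : Finset V)}, f w.1 := by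
  rw [← Finset.add_sum_erase _ f (Finset.mem_univ v)]
  congr 1
  exact Finset.sum_subtype _ (by simp) f

lemma prod_split [Fintype V] [DecidableEq V] {M : Type*} [CommMonoid M] (v : V) (f : V → M) :
    ∏ j, f j = f v * ∏ w : {x : V // x ∉ ({v} : Finset V)}, f w.1 := by
  rw [← Finset.mul_prod_erase _ f (Finset.mem_univ v)]
  congr 1
  exact Finset.prod_subtype _ (by simp) f

/-- The subset of `V` corresponding to a subset of `V \ {v}`. -/
def lift {v : V} (T : Finset {x : V // x ∉ ({v} : Finset V)}) : Finset V :=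
  T.map (Function.Embedding.subtype _)

lemma mem_lift {v : V} {T : Finset {x : V // x ∉ ({v} : Finset V)}}
    (w : {x : V // x ∉ ({v} : Finset V)}) : w.1 ∈ lift T ↔ w ∈ T := by
  obtain ⟨w, hw⟩ := w
  simp only [lift, Finset.mem_map, Function.Embedding.subtype_apply, Subtype.exists,
    exists_and_right, exists_eq_right]
  exact ⟨fun ⟨_, h⟩ => h, fun h => ⟨hw, h⟩⟩

lemma notMem_lift {v : V} {T : Finset {x : V // x ∉ ({v} : Finset V)}} : v ∉ lift T := by
  simp [lift]

lemma sum_finset_split [Fintype V] [DecidableEq V] {M : Type*} [AddCommMonoid M] (v : V)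
    (f : Finset V → M) :
    ∑ T, f T = ∑ T : Finset {x : V // x ∉ ({v} : Finset V)}, f (lift T) +
      ∑ T : Finset {x : V // x ∉ ({v} : Finset V)}, f (insert v (lift T)) := by
  have key : ∀ g : Finset V → M, ∑ T ∈ (Finset.univ.erase v).powerset, g T =
      ∑ T : Finset {x : V // x ∉ ({v} : Finset V)}, g (lift T) := by
    intro g
    symm
    refine Finset.sum_bij (fun T _ => lift T) ?_ ?_ ?_ ?_
    · intro T _
      rw [Finset.mem_powerset]
      intro x hx
      simp only [Finset.mem_erase, Finset.mem_univ, and_true]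
      rintro rfl
      exact notMem_lift hx
    · intro T _ S _ h
      exact Finset.map_injective _ h
    · intro S hS
      refine ⟨S.subtype _, Finset.mem_univ _, ?_⟩
      rw [lift, Finset.subtype_map, Finset.filter_eq_self]
      intro x hx
      simpa using (Finset.mem_erase.1 (Finset.mem_powerset.1 hS hx)).1
    · intros; rfl
  rw [← Finset.powerset_univ, ← Finset.insert_erase (Finset.mem_univ v),
    Finset.sum_powerset_insert (Finset.notMem_erase _ _), key, key]

/-- The weight of a subset, as a product over all vertices. -/
lemma weight_eq [CommRing R] [Fintype V] [DecidableEq V] (G : WMG R V) (T : Finset V) :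
    (∏ x ∈ Tᶜ, G.alpha x) * (∏ t ∈ T, G.beta t) =
      ∏ x, if x ∈ T then G.beta x else G.alpha x := by
  rw [Finset.prod_ite, mul_comm]
  congr 2 <;> ext <;> simp

/-! ### The nullities of the two smaller graphs -/

lemma nullity_lift [Fintype V] [DecidableEq V] (G : WMG R V) (v : V) (hloop : G.adj v v = 0)
    (hm : v ∈ G.marked) (T : Finset {x : V // x ∉ ({v} : Finset V)}) :
    G.nullity (lift T) = (G.delete {v}).nullity T := by
  rw [nullity_eq_finrank, nullity_eq_finrank]
  refine finrank_eq_of_graph v _ _ 0 fun x => ?_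
  have hv : v ∉ G.keep (lift T) := by simp [keep, adjT, hm, hloop, notMem_lift]
  have hadj : ∀ i j : {x : V // x ∉ ({v} : Finset V)},
      (G.delete {v}).adjT T i j = G.adjT (lift T) i.1 j.1 := by
    intro i j
    simp only [adjT, delete, Matrix.of_apply, Matrix.submatrix_apply, mem_lift, Subtype.ext_iff]
  have hkeep : ∀ i : {x : V // x ∉ ({v} : Finset V)},
      i ∈ (G.delete {v}).keep T ↔ i.1 ∈ G.keep (lift T) := by
    intro i
    simp only [keep, Finset.mem_filter, Finset.mem_univ, true_and, hadj]
    simp [delete]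
  simp only [mem_nullSpace, hkeep, hadj, Pi.zero_apply, zero_mul, Finset.sum_const_zero]
  constructor
  · intro h
    have h0 := (h v).2 hv
    refine ⟨h0, fun i => ?_⟩
    have := h i.1
    rw [sum_split v] at this
    simpa [h0] using this
  · rintro ⟨h0, h⟩ i
    by_cases hi : i = v
    · subst hi
      exact ⟨fun h => absurd h hv, fun _ => h0⟩
    · rw [sum_split v]
      simpa [h0] using h ⟨i, by simpa using hi⟩

lemma nullity_insert_lift [Fintype V] [DecidableEq V] (G : WMG R V) (v : V)
    (hloop : G.adj v v = 0) (hnbr : ∀ x : V, G.adj v x = 1 → x ∉ G.marked)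
    (T : Finset {x : V // x ∉ ({v} : Finset V)}) :
    G.nullity (insert v (lift T)) = ((G.localComp v).delete {v}).nullity T := by
  rw [nullity_eq_finrank, nullity_eq_finrank]
  refine finrank_eq_of_graph v _ _ (fun w => G.adj v w.1) fun x => ?_
  have hne : ∀ i : {x : V // x ∉ ({v} : Finset V)}, i.1 ≠ v := fun i => by simpa using i.2
  have hvv : G.adjT (insert v (lift T)) v v = 1 := by simp [adjT, hloop]
  have hvw : ∀ w : {x : V // x ∉ ({v} : Finset V)},
      G.adjT (insert v (lift T)) v w.1 = G.adj v w.1 := fun w => by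
    simp [adjT, (hne w).symm]
  have hwv : ∀ w : {x : V // x ∉ ({v} : Finset V)},
      G.adjT (insert v (lift T)) w.1 v = G.adj v w.1 := fun w => by
    simp [adjT, hne w, G.symm.apply v w.1]
  have hv : v ∈ G.keep (insert v (lift T)) := by simp [keep, hvv]
  have hadj : ∀ i j : {x : V // x ∉ ({v} : Finset V)},
      ((G.localComp v).delete {v}).adjT T i j =
        G.adjT (insert v (lift T)) i.1 j.1 + G.adj v i.1 * G.adj v j.1 := by
    intro i j
    have h2 : ∀ a b : ZMod 2, (if a = 1 ∧ b = 1 then (1 : ZMod 2) else 0) = a * b := by decide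
    simp only [adjT, delete, localComp, Matrix.of_apply, Matrix.submatrix_apply, mem_lift,
      Subtype.ext_iff, Finset.mem_insert, hne, ne_eq, not_false_eq_true, true_and, false_or, h2]
    ring
  have hkeep : ∀ i : {x : V // x ∉ ({v} : Finset V)},
      i ∈ ((G.localComp v).delete {v}).keep T ↔ i.1 ∈ G.keep (insert v (lift T)) := by
    intro i
    simp only [keep, Finset.mem_filter, Finset.mem_univ, true_and, hadj]
    have h01 : G.adj v i.1 = 0 ∨ G.adj v i.1 = 1 := by
      generalize G.adj v i.1 = a
      revert a
      decide
    rcases h01 with h | h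
    · simp [delete, localComp, h]
    · simp [delete, localComp, hnbr _ h]
  -- Row `v` forces `x v` to be the sum over the neighbors, since `-1 = 1`.
  have hrow : ∑ j, G.adjT (insert v (lift T)) v j * x j = 0 ↔
      x v = ∑ w : {x : V // x ∉ ({v} : Finset V)}, G.adj v w.1 * x w.1 := by
    rw [sum_split v, hvv, one_mul]
    simp only [hvw]
    exact CharTwo.add_eq_zero
  -- Eliminating `x v` from another row.
  have hsub : x v = ∑ w : {x : V // x ∉ ({v} : Finset V)}, G.adj v w.1 * x w.1 →
      ∀ i : {x : V // x ∉ ({v} : Finset V)}, ∑ j, G.adjT (insert v (lift T)) i.1 j * x j =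
        ∑ j : {x : V // x ∉ ({v} : Finset V)},
          (G.adjT (insert v (lift T)) i.1 j.1 + G.adj v i.1 * G.adj v j.1) * x j.1 := by
    intro h i
    rw [sum_split v, hwv, h]
    simp only [add_mul, Finset.sum_add_distrib, mul_assoc, ← Finset.mul_sum]
    exact add_comm _ _
  simp only [mem_nullSpace, hkeep, hadj]
  constructor
  · intro h
    have h0 := hrow.1 ((h v).1 hv)
    refine ⟨h0, fun i => ?_⟩
    rw [← hsub h0]
    exact h i.1
  · rintro ⟨h0, h⟩ i
    by_cases hi : i = v
    · subst hi
      exact ⟨fun _ => hrow.2 h0, fun h => absurd hv h⟩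
    · have := h ⟨i, by simpa using hi⟩
      rwa [← hsub h0] at this

end WMG

theorem marked_vertex_recursion {R : Type*} [CommRing R] (d : Rˣ) {V : Type*}
    [Fintype V] [DecidableEq V]
    (G : WMG R V) (v : V) (hloop : G.adj v v = 0) (hm : v ∈ G.marked)
    (hnbr : ∀ x : V, G.adj v x = 1 → x ∉ G.marked) :
    G.bracket d = G.alpha v * (G.delete {v}).bracket d +
      G.beta v * ((G.localComp v).delete {v}).bracket d := by
  unfold WMG.bracket
  rw [WMG.sum_finset_split v]
  simp only [WMG.weight_eq, WMG.nullity_lift G v hloop hm, WMG.nullity_insert_lift G v hloop hnbr,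
    WMG.prod_split v, WMG.notMem_lift, Finset.mem_insert_self, if_true, if_false]
  have hne : ∀ i : {x : V // x ∉ ({v} : Finset V)}, i.1 ≠ v := fun i => by simpa using i.2
  simp only [Finset.mem_insert, hne, false_or, WMG.mem_lift]
  simp only [WMG.delete, WMG.localComp, mul_assoc, ← Finset.mul_sum]
  ring
end

section
/- Let M be a symmetric n × n matrix over the two-element field GF(2), let ρ be a 1 × n row vector over GF(2), and let κ be the transpose of ρ. Let N₀ be the (n+1) × (n+1) matrix obtained from M by adjoining the column κ, the row ρ, and corner entry 0, and let N₁ be the same matrix with corner entry 1. Then two of the three nullities ν(N₀), ν(N₁), ν(M) are equal to a common value ν and the third is equal to ν + 1, where the nullity of a matrix over GF(2) is its number of columns minus its rank. -/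
/-- The `GF(2)`-nullity of a square matrix: number of columns minus rank. -/
noncomputable def gf2Nullity {m : Type*} [Fintype m] (A : Matrix m m (ZMod 2)) : ℕ :=
  Fintype.card m - A.rank

/-- The bordered matrix: adjoin to `M` the column `κ` (the transpose of `ρ`),
the row `ρ`, and corner entry `c`. -/
def borderMatrix {n : ℕ} (M : Matrix (Fin n) (Fin n) (ZMod 2)) (ρ : Fin n → ZMod 2)
    (c : ZMod 2) : Matrix (Option (Fin n)) (Option (Fin n)) (ZMod 2) :=
  Matrix.of fun p q =>
    match p, q with
    | some i, some j => M i j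
    | some i, none => ρ i
    | none, some j => ρ j
    | none, none => c

open Matrix

lemma gf2Nullity_eq_finrank_ker {m : Type*} [Fintype m] (A : Matrix m m (ZMod 2)) :
    gf2Nullity A = Module.finrank (ZMod 2) (LinearMap.ker A.mulVecLin) := by
  have h := A.mulVecLin.finrank_range_add_finrank_ker
  rw [Module.finrank_fintype_fun_eq_card] at h
  unfold gf2Nullity Matrix.rank
  omega

lemma mem_ker_borderMatrix {n : ℕ} (M : Matrix (Fin n) (Fin n) (ZMod 2)) (ρ : Fin n → ZMod 2)
    (c : ZMod 2) (z : Option (Fin n) → ZMod 2) :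
    z ∈ LinearMap.ker (borderMatrix M ρ c).mulVecLin ↔
      M *ᵥ (fun i => z (some i)) + z none • ρ = 0 ∧
        ρ ⬝ᵥ (fun i => z (some i)) + c * z none = 0 := by
  rw [LinearMap.mem_ker, Matrix.mulVecLin_apply, funext_iff, Option.forall, and_comm,
    funext_iff]
  simp [borderMatrix, Matrix.mulVec, dotProduct, Fintype.sum_option, add_comm, mul_comm]

/-- A symmetric matrix satisfies `(M w) ⬝ y = w ⬝ (M y)`. -/
lemma mulVec_dotProduct_of_isSymm {n : ℕ} {M : Matrix (Fin n) (Fin n) (ZMod 2)}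
    (hM : M.IsSymm) (w y : Fin n → ZMod 2) : (M *ᵥ w) ⬝ᵥ y = w ⬝ᵥ (M *ᵥ y) := by
  rw [Matrix.dotProduct_mulVec, ← Matrix.mulVec_transpose, hM.eq]

/-- For `ρ = M w` and corner `ρ ⬝ w`, the kernel is parametrised by
`(y, t) ↦ (y - t w, t)` with `y ∈ ker M` and `t` free. -/
lemma nullity_border_of_eq {n : ℕ} {M : Matrix (Fin n) (Fin n) (ZMod 2)}
    (hM : M.IsSymm) (w : Fin n → ZMod 2) :
    gf2Nullity (borderMatrix M (M *ᵥ w) ((M *ᵥ w) ⬝ᵥ w)) = gf2Nullity M + 1 := by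
  rw [gf2Nullity_eq_finrank_ker, gf2Nullity_eq_finrank_ker]
  let e : LinearMap.ker (borderMatrix M (M *ᵥ w) ((M *ᵥ w) ⬝ᵥ w)).mulVecLin ≃ₗ[ZMod 2]
      (LinearMap.ker M.mulVecLin × ZMod 2) :=
    { toFun := fun z => (⟨(fun i => z.1 (some i)) + z.1 none • w, by
          have h := ((mem_ker_borderMatrix _ _ _ _).1 z.2).1
          simpa [Matrix.mulVec_add, Matrix.mulVec_smul] using h⟩, z.1 none)
      map_add' := fun a b => by
        ext i <;> simp
        ring
      map_smul' := fun r a => by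
        ext i <;> simp
        ring
      invFun := fun p => ⟨fun o => o.elim p.2 (fun i => p.1.1 i - p.2 * w i), by
          have hy : M *ᵥ p.1.1 = 0 := p.1.2
          have hf : (fun i => p.1.1 i - p.2 * w i) = p.1.1 - p.2 • w := by ext; simp
          rw [mem_ker_borderMatrix]
          simp only [Option.elim_some, Option.elim_none, hf]
          constructor
          · rw [Matrix.mulVec_sub, Matrix.mulVec_smul, hy]; simp
          · rw [dotProduct_sub, mulVec_dotProduct_of_isSymm hM w p.1.1, hy]
            rw [dotProduct_zero, dotProduct_smul, smul_eq_mul]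
            ring⟩
      left_inv := fun z => by
        ext o
        cases o <;> simp
      right_inv := fun p => by
        ext i <;> simp }
  rw [e.finrank_eq, Module.finrank_prod, Module.finrank_self]

/-- For `ρ = M w` and corner other than `ρ ⬝ w`, every kernel vector has last coordinate zero,
and the kernel is a copy of `ker M`. -/
lemma nullity_border_of_ne {n : ℕ} {M : Matrix (Fin n) (Fin n) (ZMod 2)}
    (hM : M.IsSymm) (w : Fin n → ZMod 2) (c : ZMod 2) (hc : c ≠ (M *ᵥ w) ⬝ᵥ w) :
    gf2Nullity (borderMatrix M (M *ᵥ w) c) = gf2Nullity M := by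
  rw [gf2Nullity_eq_finrank_ker, gf2Nullity_eq_finrank_ker]
  have hz : ∀ z ∈ LinearMap.ker (borderMatrix M (M *ᵥ w) c).mulVecLin, z none = 0 := by
    intro z hz
    obtain ⟨h1, h2⟩ := (mem_ker_borderMatrix _ _ _ _).1 hz
    rw [mulVec_dotProduct_of_isSymm hM, eq_neg_of_add_eq_zero_left h1, dotProduct_neg,
      dotProduct_smul, dotProduct_comm, smul_eq_mul] at h2
    have h3 : (c - (M *ᵥ w) ⬝ᵥ w) * z none = 0 := by linear_combination h2
    exact (mul_eq_zero.1 h3).resolve_left (sub_ne_zero.2 hc)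
  let e : LinearMap.ker (borderMatrix M (M *ᵥ w) c).mulVecLin ≃ₗ[ZMod 2]
      LinearMap.ker M.mulVecLin :=
    { toFun := fun z => ⟨fun i => z.1 (some i), by
          have h := ((mem_ker_borderMatrix _ _ _ _).1 z.2).1
          simpa [hz z.1 z.2] using h⟩
      map_add' := fun a b => by ext i; simp
      map_smul' := fun r a => by ext i; simp
      invFun := fun y => ⟨fun o => o.elim 0 y.1, by
          have hy : M *ᵥ y.1 = 0 := y.2
          rw [mem_ker_borderMatrix]
          simp only [Option.elim_some, Option.elim_none]
          constructor
          · simp [hy]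
          · rw [mulVec_dotProduct_of_isSymm hM, hy]; simp⟩
      left_inv := fun z => by
        ext o
        cases o <;> simp [hz z.1 z.2]
      right_inv := fun y => by ext i; simp }
  exact e.finrank_eq

/-- Vectors outside the column space of a symmetric matrix do not annihilate its kernel. -/
lemma exists_ker_dotProduct_ne_zero {n : ℕ} {M : Matrix (Fin n) (Fin n) (ZMod 2)}
    (hM : M.IsSymm) {ρ : Fin n → ZMod 2} (hρ : ρ ∉ LinearMap.range M.mulVecLin) :
    ∃ y : Fin n → ZMod 2, M *ᵥ y = 0 ∧ ρ ⬝ᵥ y ≠ 0 := by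
  obtain ⟨f, hf, hle⟩ := Submodule.exists_le_ker_of_notMem hρ
  obtain ⟨y, rfl⟩ := (dotProductEquiv (ZMod 2) (Fin n)).surjective f
  refine ⟨y, ?_, ?_⟩
  · refine dotProduct_eq_zero _ fun w => ?_
    rw [mulVec_dotProduct_of_isSymm hM]
    simpa using hle ⟨w, rfl⟩
  · rw [dotProduct_comm]
    simpa using hf

/-- If `ρ` is outside the column space of `M`, bordering lowers the nullity by one, whatever
the corner entry. -/
lemma nullity_border_of_notMem {n : ℕ} {M : Matrix (Fin n) (Fin n) (ZMod 2)}
    (hM : M.IsSymm) {ρ : Fin n → ZMod 2} (hρ : ρ ∉ LinearMap.range M.mulVecLin) (c : ZMod 2) :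
    gf2Nullity M = gf2Nullity (borderMatrix M ρ c) + 1 := by
  rw [gf2Nullity_eq_finrank_ker, gf2Nullity_eq_finrank_ker]
  have hz : ∀ z ∈ LinearMap.ker (borderMatrix M ρ c).mulVecLin, z none = 0 := by
    intro z hz
    by_contra h
    refine hρ ⟨-(z none)⁻¹ • fun i => z (some i), ?_⟩
    have h1 := ((mem_ker_borderMatrix _ _ _ _).1 hz).1
    rw [Matrix.mulVecLin_apply, Matrix.mulVec_smul, eq_neg_of_add_eq_zero_left h1, smul_neg,
      neg_smul, neg_neg, smul_smul, inv_mul_cancel₀ h, one_smul]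
  let f : LinearMap.ker M.mulVecLin →ₗ[ZMod 2] ZMod 2 :=
    (dotProductEquiv (ZMod 2) (Fin n) ρ).domRestrict _
  have hf : ∀ y, f y = ρ ⬝ᵥ y.1 := fun y => rfl
  have hsurj : LinearMap.range f = ⊤ := by
    obtain ⟨y, hy, hne⟩ := exists_ker_dotProduct_ne_zero hM hρ
    refine LinearMap.range_eq_top.2 (LinearMap.surjective fun h => hne ?_)
    exact (hf ⟨y, hy⟩).symm.trans (by rw [h]; rfl)
  let e : LinearMap.ker (borderMatrix M ρ c).mulVecLin ≃ₗ[ZMod 2] LinearMap.ker f :=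
    { toFun := fun z => ⟨⟨fun i => z.1 (some i), by
          have h := ((mem_ker_borderMatrix _ _ _ _).1 z.2).1
          simpa [hz z.1 z.2] using h⟩, by
          have h := ((mem_ker_borderMatrix _ _ _ _).1 z.2).2
          rw [LinearMap.mem_ker, hf]
          simpa [hz z.1 z.2] using h⟩
      map_add' := fun a b => by ext i; simp
      map_smul' := fun r a => by ext i; simp
      invFun := fun y => ⟨fun o => o.elim 0 y.1.1, by
          have hy : M *ᵥ y.1.1 = 0 := y.1.2
          have hy' : ρ ⬝ᵥ y.1.1 = 0 := y.2
          rw [mem_ker_borderMatrix]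
          simp [hy, hy']⟩
      left_inv := fun z => by
        ext o
        cases o <;> simp [hz z.1 z.2]
      right_inv := fun y => by ext i; simp }
  have h := f.finrank_range_add_finrank_ker
  rw [hsurj, finrank_top, Module.finrank_self] at h
  rw [e.finrank_eq, ← h, add_comm]

theorem nullity_trichotomy {n : ℕ} (M : Matrix (Fin n) (Fin n) (ZMod 2))
    (hM : M.IsSymm) (ρ : Fin n → ZMod 2) :
    ∃ ν : ℕ,
      (gf2Nullity (borderMatrix M ρ 0) = ν + 1 ∧ gf2Nullity (borderMatrix M ρ 1) = ν ∧
        gf2Nullity M = ν) ∨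
      (gf2Nullity (borderMatrix M ρ 0) = ν ∧ gf2Nullity (borderMatrix M ρ 1) = ν + 1 ∧
        gf2Nullity M = ν) ∨
      (gf2Nullity (borderMatrix M ρ 0) = ν ∧ gf2Nullity (borderMatrix M ρ 1) = ν ∧
        gf2Nullity M = ν + 1) := by
  by_cases hρ : ρ ∈ LinearMap.range M.mulVecLin
  · obtain ⟨w, rfl⟩ := hρ
    rw [Matrix.mulVecLin_apply]
    refine ⟨gf2Nullity M, ?_⟩
    have heq := nullity_border_of_eq hM w
    have hne := nullity_border_of_ne hM w
    have h01 : ∀ c : ZMod 2, c = 0 ∨ c = 1 := by decide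
    rcases h01 ((M *ᵥ w) ⬝ᵥ w) with h | h <;> rw [h] at heq hne
    · exact Or.inl ⟨heq, hne 1 (by decide), rfl⟩
    · exact Or.inr (Or.inl ⟨hne 0 (by decide), heq, rfl⟩)
  · have h0 := nullity_border_of_notMem hM hρ 0
    have h1 := nullity_border_of_notMem hM hρ 1
    exact ⟨gf2Nullity (borderMatrix M ρ 0), Or.inr (Or.inr ⟨rfl, by omega, h0⟩)⟩
end
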